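/- Let k ≥ 5 and ℓ ≥ 3 be integers, and let p = p(n) ∈ [0,1] satisfy p(n)·n^{k−3}/(log n)² → ∞ as n → ∞. Then for every ε > 0, the probability that (⌊(ℓ−1)/2⌋−ε)·p·C(n,k−1) ≤ ex(G^(k)(n,p), C^(k)_ℓ) ≤ (⌊(ℓ−1)/2⌋+ε)·p·C(n,k−1) tends to 1 as n → ∞; that is, with high probability ex(G^(k)(n,p), C^(k)_ℓ) = (⌊(ℓ−1)/2⌋+o(1))·p·C(n,k−1). -/

import Mathlib

open Finset Filter

attribute [local instance] Classical.propDecidable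

/-- The vertex set `[n] = {1,…,n}`. -/
def vtx (n : ℕ) : Finset ℕ := Finset.Icc 1 n

/-- `F` is a `k`-graph on `[n]`: a family of `k`-element subsets of `[n]`. -/
def IsKGraphOn (k n : ℕ) (F : Finset (Finset ℕ)) : Prop :=
  ∀ E ∈ F, E ⊆ vtx n ∧ E.card = k

/-- The vertex set of a hypergraph (union of its edges). -/
def vertexSet {α : Type} [DecidableEq α] (H : Finset (Finset α)) : Finset α := H.sup id

/-- The degree of a vertex: the number of edges containing it. -/
def vdeg {α : Type} [DecidableEq α] (H : Finset (Finset α)) (v : α) : ℕ :=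
  (H.filter fun E => v ∈ E).card

/-- Hypertrees, defined recursively: a single edge is a hypertree, and a hypertree grows
by adding a new leaf edge `E` whose intersection with the current vertex set equals its
intersection with some existing (parent) edge `F`. -/
inductive IsHypertree {α : Type} [DecidableEq α] : Finset (Finset α) → Prop
  | single (E : Finset α) : IsHypertree {E}
  | grow {H : Finset (Finset α)} (E F : Finset α) (hH : IsHypertree H) (hE : E ∉ H)
      (hF : F ∈ H) (hint : E ∩ vertexSet H = E ∩ F) : IsHypertree (insert E H)

/-- A `k`-tree: a `k`-uniform hypertree. -/
def IsKTree {α : Type} [DecidableEq α] (k : ℕ) (H : Finset (Finset α)) : Prop :=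
  IsHypertree H ∧ ∀ E ∈ H, E.card = k

/-- A hypergraph is 2-contractible if every edge contains at least two vertices of degree 1. -/
def TwoContractible {α : Type} [DecidableEq α] (H : Finset (Finset α)) : Prop :=
  ∀ E ∈ H, 2 ≤ (E.filter fun v => vdeg H v = 1).card

/-- `S` is a cross-cut of `H`: every edge meets `S` in exactly one vertex. -/
def IsCrosscut {α : Type} [DecidableEq α] (H : Finset (Finset α)) (S : Finset α) : Prop :=
  ∀ E ∈ H, (E ∩ S).card = 1

/-- `σ` is the cross-cut number of `H`: the minimum size of a cross-cut. -/
def IsCrosscutNumber {α : Type} [DecidableEq α] (H : Finset (Finset α)) (σ : ℕ) : Prop :=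
  IsLeast {m | ∃ S : Finset α, IsCrosscut H S ∧ S.card = m} σ

/-- A hypergraph is `ℓ`-overlapping if any two distinct edges meet in at most `ℓ` vertices. -/
def Overlapping {α : Type} [DecidableEq α] (ℓ : ℕ) (H : Finset (Finset α)) : Prop :=
  ∀ E ∈ H, ∀ F ∈ H, E ≠ F → (E ∩ F).card ≤ ℓ

/-- `K` is (the edge set of) a copy of `H`, i.e. the image of `H` under a map that is
injective on the vertex set of `H`. -/
def IsCopyOf {α : Type} [DecidableEq α] (H : Finset (Finset α)) (K : Finset (Finset ℕ)) : Prop :=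
  ∃ φ : α → ℕ, Set.InjOn φ ↑(vertexSet H) ∧ K = H.image fun E => E.image φ

/-- `F` contains no subgraph isomorphic to `H`. -/
def HFree {α : Type} [DecidableEq α] (H : Finset (Finset α)) (F : Finset (Finset ℕ)) : Prop :=
  ∀ K ⊆ F, ¬ IsCopyOf H K

/-- The collection of copies of `H` in `F` (as distinct subgraphs of `F`). -/
noncomputable def copies {α : Type} [DecidableEq α] (H : Finset (Finset α))
    (F : Finset (Finset ℕ)) : Finset (Finset (Finset ℕ)) :=
  F.powerset.filter (IsCopyOf H)

/-- The number of `H`-free `k`-graphs on the vertex set `[n]`. -/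
noncomputable def forb {α : Type} [DecidableEq α] (n k : ℕ) (H : Finset (Finset α)) : ℕ :=
  (((vtx n).powersetCard k).powerset.filter (HFree H)).card

/-- `H` is a `k`-uniform linear cycle of length `ℓ`. -/
def IsLinearCycle {α : Type} [DecidableEq α] (k ℓ : ℕ) (H : Finset (Finset α)) : Prop :=
  ∃ E : ℕ → Finset α,
    (∀ i < ℓ, (E i).card = k) ∧
    (∀ i < ℓ, ∀ j < ℓ, i ≠ j → E i ≠ E j) ∧
    (∀ i < ℓ, (E i ∩ E ((i + 1) % ℓ)).card = 1) ∧
    (∀ i < ℓ, ∀ j < ℓ, i ≠ j → E i ∩ E ((i + 1) % ℓ) ≠ E j ∩ E ((j + 1) % ℓ)) ∧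
    (∀ i < ℓ, ∀ j < ℓ, i ≠ j → (i + 1) % ℓ ≠ j → (j + 1) % ℓ ≠ i → Disjoint (E i) (E j)) ∧
    H = (Finset.range ℓ).image E

/-- `(X 0, …, X (k-1))` is a `k`-partition of `F`. -/
def IsKPartition (k : ℕ) (F : Finset (Finset ℕ)) (X : Fin k → Finset ℕ) : Prop :=
  (∀ i j, i ≠ j → Disjoint (X i) (X j)) ∧ ∀ E ∈ F, ∀ i, (E ∩ X i).card = 1

/-- The `J`-projection of an edge. -/
def projJ {k : ℕ} (X : Fin k → Finset ℕ) (J : Finset (Fin k)) (E : Finset ℕ) : Finset ℕ :=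
  E ∩ J.sup X

/-- The pattern of a vertex set. -/
def pattern {k : ℕ} (X : Fin k → Finset ℕ) (D : Finset ℕ) : Finset (Fin k) :=
  Finset.univ.filter fun i => (D ∩ X i).Nonempty

/-- `MI(F)`: the patterns of intersections of pairs of distinct edges. -/
noncomputable def MI {k : ℕ} (F : Finset (Finset ℕ)) (X : Fin k → Finset ℕ) :
    Finset (Finset (Fin k)) :=
  ((F ×ˢ F).filter fun p => p.1 ≠ p.2).image fun p => pattern X (p.1 ∩ p.2)

/-- The link of a vertex set `D` in `F`. -/
def link {α : Type} [DecidableEq α] (F : Finset (Finset α)) (D : Finset α) :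
    Finset (Finset α) :=
  (F.filter fun E => D ⊆ E).image fun E => E \ D

/-- The degree of a vertex set `D` in `F`: the size of its link. -/
def setDeg {α : Type} [DecidableEq α] (F : Finset (Finset α)) (D : Finset α) : ℕ :=
  (link F D).card

/-- A nonempty hypergraph is `s`-diverse if every vertex has degree less than `|H|/s`. -/
def SDiverse {α : Type} [DecidableEq α] (s : ℕ) (H : Finset (Finset α)) : Prop :=
  H.Nonempty ∧ ∀ v : α, s * vdeg H v < H.card

/-- `D` is `s`-strong in `F` if its link is `s`-diverse. -/
def SStrong {α : Type} [DecidableEq α] (s : ℕ) (F : Finset (Finset α)) (D : Finset α) : Prop :=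
  SDiverse s (link F D)

/-- `F`, with `k`-partition `X`, is `s`-super-homogeneous: for every `J ∈ MI(F)` and every
edge `E ∈ F`, the projection `E_J` is `s`-strong and `d_F(E_J) ≥ max{s, |F|/(2k·n^|J|)}`. -/
def SuperHomogeneous (n k s : ℕ) (F : Finset (Finset ℕ)) (X : Fin k → Finset ℕ) : Prop :=
  ∀ J ∈ MI F X, ∀ E ∈ F,
    SStrong s F (projJ X J E) ∧
    s ≤ setDeg F (projJ X J E) ∧
    (F.card : ℝ) / (2 * k * (n : ℝ) ^ J.card) ≤ (setDeg F (projJ X J E) : ℝ)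

/-- The rank of a family of subsets of `[k]`: the minimum size of a set `D ⊆ [k]` contained
in no member of the family. -/
noncomputable def rankFam (k : ℕ) (𝒥 : Finset (Finset (Fin k))) : ℕ :=
  sInf {d | ∃ D : Finset (Fin k), D.card = d ∧ ∀ J ∈ 𝒥, ¬ D ⊆ J}

/-- A family of subsets of `[k]` is of type 1 if it contains the full power set of some
`(k-2)`-set `B`. -/
def TypeOne (k : ℕ) (𝒥 : Finset (Finset (Fin k))) : Prop :=
  ∃ B : Finset (Fin k), B.card = k - 2 ∧ ∀ S ⊆ B, S ∈ 𝒥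

/-- The constant `c(k,s) = k!/(k^k·(2s(1+2^k))^(2^k))`. -/
noncomputable def cks (k s : ℕ) : ℝ :=
  (Nat.factorial k : ℝ) / ((k : ℝ) ^ k * (2 * (s : ℝ) * (1 + 2 ^ k)) ^ (2 ^ k))

/-- Degree of a set of vertices in a (uniform) hypergraph `K`: number of edges containing it. -/
def uDeg {α : Type} [DecidableEq α] (K : Finset (Finset α)) (S : Finset α) : ℕ :=
  (K.filter fun e => S ⊆ e).card

/-- A `t`-uniform hypergraph is `d`-graded if `d_K(S) ≤ d^(t-|S|)` for all `S` with
`1 ≤ |S| ≤ t`. -/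
def Graded {α : Type} [DecidableEq α] (t : ℕ) (d : ℝ) (K : Finset (Finset α)) : Prop :=
  ∀ S : Finset α, 1 ≤ S.card → S.card ≤ t → (uDeg K S : ℝ) ≤ d ^ (t - S.card)

/-- `S` is saturated by `K`: `d_K(S) = ⌊d^(t-|S|)⌋`. -/
def Saturated {α : Type} [DecidableEq α] (t : ℕ) (d : ℝ) (K : Finset (Finset α))
    (S : Finset α) : Prop :=
  uDeg K S = ⌊d ^ (t - S.card)⌋₊

/-- `S` is admissible: no nonempty subset of `S` is saturated. -/
def Admissible {α : Type} [DecidableEq α] (t : ℕ) (d : ℝ) (K : Finset (Finset α))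
    (S : Finset α) : Prop :=
  ∀ S' ⊆ S, S'.Nonempty → ¬ Saturated t d K S'

/-- `Z_K(S)`: the vertices `v` such that `S ∪ {v}` is inadmissible and `{v}` is not
saturated. -/
noncomputable def Zset {α : Type} [DecidableEq α] (t : ℕ) (d : ℝ) (K : Finset (Finset α))
    (S : Finset α) : Finset α :=
  (vertexSet K).filter fun v => ¬ Admissible t d K (insert v S) ∧ ¬ Saturated t d K {v}

/-- `ex(G,H)`: the maximum number of edges of an `H`-free subgraph of `G`. -/
noncomputable def exIn {α : Type} [DecidableEq α] (H : Finset (Finset α))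
    (G : Finset (Finset ℕ)) : ℕ :=
  (G.powerset.filter (HFree H)).sup Finset.card

/-- The probability, in the random `k`-graph `G^(k)(n,p)` (each `k`-subset of `[n]` is an
edge independently with probability `p`), of the event `A`. -/
noncomputable def probEvent (k n : ℕ) (p : ℝ) (A : Finset (Finset ℕ) → Prop) : ℝ :=
  ∑ G ∈ ((vtx n).powersetCard k).powerset.filter A,
    p ^ G.card * (1 - p) ^ (((vtx n).powersetCard k).card - G.card)


/-! ### Isomorphism of families with the same intersection pattern -/

noncomputable def rtTy {α : Type} (ℓ : ℕ) (E : ℕ → Finset α) (x : α) : Finset ℕ :=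
  (Finset.range ℓ).filter fun i => x ∈ E i

noncomputable def rtAtom {α : Type} (ℓ : ℕ) (E : ℕ → Finset α) (I : Finset ℕ) : Finset α :=
  ((Finset.range ℓ).biUnion E).filter fun x => rtTy ℓ E x = I

lemma rtTy_mem {α : Type} (ℓ : ℕ) (E : ℕ → Finset α) (x : α) (i : ℕ) :
    i ∈ rtTy ℓ E x ↔ i < ℓ ∧ x ∈ E i := by
  simp [rtTy]

lemma rtAtom_mem {α : Type} (ℓ : ℕ) (E : ℕ → Finset α) (I : Finset ℕ) (x : α) :
    x ∈ rtAtom ℓ E I ↔ (∃ i < ℓ, x ∈ E i) ∧ rtTy ℓ E x = I := by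
  simp [rtAtom]

def RtTriple {α : Type} (ℓ : ℕ) (E : ℕ → Finset α) : Prop :=
  ∀ i < ℓ, ∀ j < ℓ, ∀ m < ℓ, i ≠ j → i ≠ m → j ≠ m → ∀ x, x ∈ E i → x ∈ E j → x ∈ E m → False

lemma rtAtom_empty {α : Type} (ℓ : ℕ) (E : ℕ → Finset α) (I : Finset ℕ)
    (hI : ¬ ∃ x, (∃ i < ℓ, x ∈ E i) ∧ rtTy ℓ E x = I) : (rtAtom ℓ E I).card = 0 := by
  rw [Finset.card_eq_zero, Finset.eq_empty_iff_forall_notMem]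
  intro x hx
  exact hI ⟨x, (rtAtom_mem ℓ E I x).1 hx⟩

lemma rtAtom_pair {α : Type} (ℓ : ℕ) (E : ℕ → Finset α) (h3 : RtTriple ℓ E) (i j : ℕ)
    (hi : i < ℓ) (hj : j < ℓ) (hij : i ≠ j) :
    rtAtom ℓ E {i, j} = E i ∩ E j := by
  ext x
  rw [rtAtom_mem, Finset.mem_inter]
  constructor
  · rintro ⟨-, h⟩
    have h1 : i ∈ rtTy ℓ E x := by rw [h]; simp
    have h2 : j ∈ rtTy ℓ E x := by rw [h]; simp
    exact ⟨((rtTy_mem _ _ _ _).1 h1).2, ((rtTy_mem _ _ _ _).1 h2).2⟩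
  · rintro ⟨h1, h2⟩
    refine ⟨⟨i, hi, h1⟩, ?_⟩
    ext m
    rw [rtTy_mem, Finset.mem_insert, Finset.mem_singleton]
    constructor
    · rintro ⟨hm, hx⟩
      by_contra hcon
      push Not at hcon
      exact h3 i hi j hj m hm hij (Ne.symm hcon.1) (Ne.symm hcon.2) x h1 h2 hx
    · rintro (rfl | rfl)
      · exact ⟨hi, h1⟩
      · exact ⟨hj, h2⟩

lemma rtAtom_single {α : Type} (ℓ : ℕ) (E : ℕ → Finset α) (h3 : RtTriple ℓ E) (i : ℕ)
    (hi : i < ℓ) :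
    (rtAtom ℓ E {i}).card + ∑ j ∈ (Finset.range ℓ).erase i, (E i ∩ E j).card = (E i).card := by
  have hd : ∀ a ∈ (Finset.range ℓ).erase i, ∀ b ∈ (Finset.range ℓ).erase i, a ≠ b →
      Disjoint (E i ∩ E a) (E i ∩ E b) := by
    intro a ha b hb hab
    rw [Finset.disjoint_left]
    intro x hx hy
    simp only [Finset.mem_erase, Finset.mem_range, Finset.mem_inter] at *
    exact h3 i hi a ha.2 b hb.2 (Ne.symm ha.1) (Ne.symm hb.1) hab x hx.1 hx.2 hy.2
  rw [← Finset.card_biUnion hd, ← Finset.card_union_of_disjoint]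
  · congr 1
    ext x
    simp only [Finset.mem_union, rtAtom_mem, Finset.mem_biUnion, Finset.mem_erase,
      Finset.mem_range, Finset.mem_inter]
    constructor
    · rintro (⟨-, h⟩ | ⟨a, _, h, _⟩)
      · have h1 : i ∈ rtTy ℓ E x := by rw [h]; simp
        exact ((rtTy_mem _ _ _ _).1 h1).2
      · exact h
    · intro hx
      by_cases hq : ∃ a, (a ≠ i ∧ a < ℓ) ∧ x ∈ E a
      · obtain ⟨a, ha, hxa⟩ := hq
        exact Or.inr ⟨a, ha, hx, hxa⟩
      · left
        refine ⟨⟨i, hi, hx⟩, ?_⟩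
        ext m
        rw [rtTy_mem, Finset.mem_singleton]
        constructor
        · rintro ⟨hm, hxm⟩
          by_contra hne
          exact hq ⟨m, ⟨hne, hm⟩, hxm⟩
        · rintro rfl
          exact ⟨hi, hx⟩
  · rw [Finset.disjoint_left]
    intro x hx hy
    simp only [rtAtom_mem, Finset.mem_biUnion, Finset.mem_erase,
      Finset.mem_range, Finset.mem_inter] at hx hy
    obtain ⟨a, ⟨hai, ha⟩, _, hxa⟩ := hy
    have : a ∈ rtTy ℓ E x := (rtTy_mem _ _ _ _).2 ⟨ha, hxa⟩
    rw [hx.2, Finset.mem_singleton] at this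
    exact hai this

lemma rtAtom_card_eq {α β : Type} (ℓ : ℕ) (E : ℕ → Finset α) (E' : ℕ → Finset β)
    (h1 : ∀ i < ℓ, (E i).card = (E' i).card)
    (h2 : ∀ i < ℓ, ∀ j < ℓ, i ≠ j → (E i ∩ E j).card = (E' i ∩ E' j).card)
    (h3 : RtTriple ℓ E) (h3' : RtTriple ℓ E') (I : Finset ℕ) :
    (rtAtom ℓ E I).card = (rtAtom ℓ E' I).card := by
  by_cases hI : I ⊆ Finset.range ℓ
  swap
  · have aux : ∀ {γ : Type} (X : ℕ → Finset γ), (rtAtom ℓ X I).card = 0 := by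
      intro γ X
      apply rtAtom_empty
      rintro ⟨x, -, h⟩
      apply hI
      rw [← h]
      exact Finset.filter_subset _ _
    rw [aux, aux]
  by_cases h0 : I.card = 0
  · have aux : ∀ {γ : Type} (X : ℕ → Finset γ), (rtAtom ℓ X I).card = 0 := by
      intro γ X
      apply rtAtom_empty
      rintro ⟨x, ⟨i, hi, hx⟩, h⟩
      rw [Finset.card_eq_zero] at h0
      have : i ∈ rtTy ℓ X x := (rtTy_mem _ _ _ _).2 ⟨hi, hx⟩
      rw [h, h0] at this
      simp at this
    rw [aux, aux]
  by_cases h1c : I.card = 1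
  · obtain ⟨i, rfl⟩ := Finset.card_eq_one.1 h1c
    have hi : i < ℓ := by simpa using hI
    have e1 := rtAtom_single ℓ E h3 i hi
    have e2 := rtAtom_single ℓ E' h3' i hi
    have e3 : ∑ j ∈ (Finset.range ℓ).erase i, (E i ∩ E j).card =
        ∑ j ∈ (Finset.range ℓ).erase i, (E' i ∩ E' j).card := by
      apply Finset.sum_congr rfl
      intro j hj
      simp only [Finset.mem_erase, Finset.mem_range] at hj
      exact h2 i hi j hj.2 (Ne.symm hj.1)
    have := h1 i hi
    omega
  by_cases h2c : I.card = 2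
  · obtain ⟨i, j, hij, rfl⟩ := Finset.card_eq_two.1 h2c
    have hi : i < ℓ := by
      have : i ∈ Finset.range ℓ := hI (by simp)
      simpa using this
    have hj : j < ℓ := by
      have : j ∈ Finset.range ℓ := hI (by simp)
      simpa using this
    rw [rtAtom_pair ℓ E h3 i j hi hj hij, rtAtom_pair ℓ E' h3' i j hi hj hij, h2 i hi j hj hij]
  · have h4 : 2 < I.card := by omega
    obtain ⟨a, b, c, ha, hb, hc, hab, hac, hbc⟩ := Finset.two_lt_card_iff.1 h4
    have aux : ∀ {γ : Type} (X : ℕ → Finset γ), RtTriple ℓ X → (rtAtom ℓ X I).card = 0 := by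
      intro γ X hX
      apply rtAtom_empty
      rintro ⟨x, -, h⟩
      rw [← h, rtTy_mem] at ha hb hc
      exact hX a ha.1 b hb.1 c hc.1 hab hac hbc x ha.2 hb.2 hc.2
    rw [aux E h3, aux E' h3']

lemma rt_iso {α : Type} [DecidableEq α] (ℓ : ℕ) (E : ℕ → Finset α) (E' : ℕ → Finset ℕ)
    (h1 : ∀ i < ℓ, (E i).card = (E' i).card)
    (h2 : ∀ i < ℓ, ∀ j < ℓ, i ≠ j → (E i ∩ E j).card = (E' i ∩ E' j).card)
    (h3 : RtTriple ℓ E) (h3' : RtTriple ℓ E') :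
    ∃ φ : α → ℕ, Set.InjOn φ {x | ∃ i < ℓ, x ∈ E i} ∧ ∀ i < ℓ, (E i).image φ = E' i := by
  have hcard := rtAtom_card_eq ℓ E E' (by simpa using h1) (by
    intro i hi j hj hij
    convert h2 i hi j hj hij) h3 h3'
  let e : ∀ I, rtAtom ℓ E I ≃ rtAtom ℓ E' I := fun I => Finset.equivOfCardEq (hcard I)
  have hself : ∀ x, (∃ i < ℓ, x ∈ E i) → x ∈ rtAtom ℓ E (rtTy ℓ E x) := by
    intro x hx
    exact (rtAtom_mem _ _ _ _).2 ⟨hx, rfl⟩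
  let φ : α → ℕ := fun x => if h : ∃ i < ℓ, x ∈ E i then (e (rtTy ℓ E x) ⟨x, hself x h⟩ : ℕ) else 0
  have hφ : ∀ x (h : ∃ i < ℓ, x ∈ E i), φ x = (e (rtTy ℓ E x) ⟨x, hself x h⟩ : ℕ) := by
    intro x h
    simp only [φ, dif_pos h]
  have hty : ∀ x, (∃ i < ℓ, x ∈ E i) → rtTy ℓ E' (φ x) = rtTy ℓ E x := by
    intro x h
    rw [hφ x h]
    exact ((rtAtom_mem _ _ _ _).1 (e (rtTy ℓ E x) ⟨x, hself x h⟩).2).2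
  refine ⟨φ, ?_, ?_⟩
  · intro x hx y hy hxy
    have hx' : ∃ i < ℓ, x ∈ E i := hx
    have hy' : ∃ i < ℓ, y ∈ E i := hy
    have ht : rtTy ℓ E x = rtTy ℓ E y := by
      rw [← hty x hx', ← hty y hy', hxy]
    rw [hφ x hx', hφ y hy'] at hxy
    have key : ∀ (I J : Finset ℕ) (hI : x ∈ rtAtom ℓ E I) (hJ : y ∈ rtAtom ℓ E J), I = J →
        ((e I ⟨x, hI⟩ : ℕ) = (e J ⟨y, hJ⟩ : ℕ)) → x = y := by
      intro I J hI hJ hIJ h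
      subst hIJ
      have := (e I).injective (Subtype.ext h)
      exact congrArg Subtype.val this
    exact key _ _ _ _ ht hxy
  · intro i hi
    ext z
    rw [Finset.mem_image]
    constructor
    · rintro ⟨x, hx, rfl⟩
      have hx' : ∃ i < ℓ, x ∈ E i := ⟨i, hi, hx⟩
      have : i ∈ rtTy ℓ E' (φ x) := by
        rw [hty x hx', rtTy_mem]
        exact ⟨hi, hx⟩
      exact ((rtTy_mem _ _ _ _).1 this).2
    · intro hz
      have hz' : z ∈ rtAtom ℓ E' (rtTy ℓ E' z) := (rtAtom_mem _ _ _ _).2 ⟨⟨i, hi, hz⟩, rfl⟩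
      set I := rtTy ℓ E' z with hI
      obtain ⟨⟨x, hx⟩, hxe⟩ := (e I).surjective ⟨z, hz'⟩
      have hx2 := (rtAtom_mem _ _ _ _).1 hx
      refine ⟨x, ?_, ?_⟩
      · have : i ∈ rtTy ℓ E x := by
          rw [hx2.2, hI, rtTy_mem]
          exact ⟨hi, hz⟩
        exact ((rtTy_mem _ _ _ _).1 this).2
      · rw [hφ x hx2.1]
        have key : ∀ (J : Finset ℕ) (hJ : x ∈ rtAtom ℓ E J), J = I →
            (e J ⟨x, hJ⟩ : ℕ) = z := by
          intro J hJ hJI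
          subst hJI
          rw [hxe]
        exact key _ _ hx2.2


/-! ### Embedding linear cycles greedily -/

def RtCons (ℓ i j : ℕ) : Prop := (i + 1) % ℓ = j ∨ (j + 1) % ℓ = i

lemma rt_mod (ℓ i : ℕ) (hi : i < ℓ) :
    (i + 1 < ℓ ∧ (i + 1) % ℓ = i + 1) ∨ (i + 1 = ℓ ∧ (i + 1) % ℓ = 0) := by
  by_cases h : i + 1 < ℓ
  · exact Or.inl ⟨h, Nat.mod_eq_of_lt h⟩
  · have : i + 1 = ℓ := by omega
    right
    refine ⟨this, ?_⟩
    rw [this, Nat.mod_self]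

lemma lc_triple {α : Type} [DecidableEq α] (ℓ : ℕ) (E : ℕ → Finset α)
    (h3 : ∀ i < ℓ, (E i ∩ E ((i + 1) % ℓ)).card = 1)
    (h4 : ∀ i < ℓ, ∀ j < ℓ, i ≠ j → E i ∩ E ((i + 1) % ℓ) ≠ E j ∩ E ((j + 1) % ℓ))
    (h5 : ∀ i < ℓ, ∀ j < ℓ, i ≠ j → (i + 1) % ℓ ≠ j → (j + 1) % ℓ ≠ i → Disjoint (E i) (E j)) :
    RtTriple ℓ E := by
  intro i hi j hj m hm hij him hjm x hxi hxj hxm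
  have uniq : ∀ a < ℓ, ∀ b < ℓ, x ∈ E a ∩ E ((a + 1) % ℓ) → x ∈ E b ∩ E ((b + 1) % ℓ) → a = b := by
    intro a ha b hb hxa hxb
    by_contra hab
    apply h4 a ha b hb hab
    obtain ⟨y, hy⟩ := Finset.card_eq_one.1 (h3 a ha)
    obtain ⟨z, hz⟩ := Finset.card_eq_one.1 (h3 b hb)
    rw [hy, Finset.mem_singleton] at hxa
    rw [hz, Finset.mem_singleton] at hxb
    rw [hy, hz, ← hxa, ← hxb]
  have ex : ∀ a < ℓ, ∀ b < ℓ, a ≠ b → x ∈ E a → x ∈ E b →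
      ∃ c, (c = a ∨ c = b) ∧ c < ℓ ∧ x ∈ E c ∩ E ((c + 1) % ℓ) := by
    intro a ha b hb hab hxa hxb
    by_cases q1 : (a + 1) % ℓ = b
    · exact ⟨a, Or.inl rfl, ha, by rw [q1]; exact Finset.mem_inter.2 ⟨hxa, hxb⟩⟩
    by_cases q2 : (b + 1) % ℓ = a
    · exact ⟨b, Or.inr rfl, hb, by rw [q2]; exact Finset.mem_inter.2 ⟨hxb, hxa⟩⟩
    · exact absurd hxb (Finset.disjoint_left.1 (h5 a ha b hb hab q1 q2) hxa)
  obtain ⟨c1, d1, f1, g1⟩ := ex i hi j hj hij hxi hxj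
  obtain ⟨c2, d2, f2, g2⟩ := ex i hi m hm him hxi hxm
  obtain ⟨c3, d3, f3, g3⟩ := ex j hj m hm hjm hxj hxm
  have u1 := uniq c1 f1 c2 f2 g1 g2
  have u2 := uniq c1 f1 c3 f3 g1 g3
  omega

lemma lc_pair {α : Type} [DecidableEq α] (ℓ : ℕ) (E : ℕ → Finset α)
    (h3 : ∀ i < ℓ, (E i ∩ E ((i + 1) % ℓ)).card = 1)
    (h5 : ∀ i < ℓ, ∀ j < ℓ, i ≠ j → (i + 1) % ℓ ≠ j → (j + 1) % ℓ ≠ i → Disjoint (E i) (E j))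
    (i j : ℕ) (hi : i < ℓ) (hj : j < ℓ) (hij : i ≠ j) :
    (E i ∩ E j).card = if RtCons ℓ i j then 1 else 0 := by
  split_ifs with h
  · rcases h with h | h
    · rw [← h]; exact h3 i hi
    · rw [Finset.inter_comm, ← h]; exact h3 j hj
  · unfold RtCons at h
    push Not at h
    rw [Finset.card_eq_zero]
    exact Finset.disjoint_iff_inter_eq_empty.1 (h5 i hi j hj hij h.1 h.2)

lemma rt_greedy (k ℓ : ℕ) (F : Finset (Finset ℕ)) (hFk : ∀ E ∈ F, E.card = k)
    (B : ℕ → Finset ℕ) (hBc : ∀ i < ℓ, (B i).card ≤ 3)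
    (hstrong : ∀ i < ℓ, ∀ S : Finset ℕ, S.card ≤ (k + 3) * ℓ → Disjoint S (B i) →
      ∃ E ∈ F, B i ⊆ E ∧ Disjoint E S) :
    ∀ m ≤ ℓ, ∃ E' : ℕ → Finset ℕ, (∀ i < m, E' i ∈ F ∧ B i ⊆ E' i ∧
        ∀ j < ℓ, Disjoint (E' i) (B j \ B i)) ∧
      ∀ i < m, ∀ j < m, i < j → Disjoint (E' j) (E' i \ B j) := by
  intro m
  induction m with
  | zero => intro _; exact ⟨fun _ => ∅, by simp, by simp⟩
  | succ m ih =>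
    intro hm
    obtain ⟨E', h1, h2⟩ := ih (by omega)
    let S : Finset ℕ := ((Finset.range m).biUnion E' ∪ (Finset.range ℓ).biUnion B) \ B m
    have hS : S.card ≤ (k + 3) * ℓ := by
      have a1 : ((Finset.range m).biUnion E').card ≤ m * k := by
        have := Finset.card_biUnion_le_card_mul (Finset.range m) E' k (by
          intro i hi
          exact le_of_eq (hFk _ (h1 i (Finset.mem_range.1 hi)).1))
        simpa using this
      have a2 : ((Finset.range ℓ).biUnion B).card ≤ ℓ * 3 := by
        have := Finset.card_biUnion_le_card_mul (Finset.range ℓ) B 3 (by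
          intro i hi
          exact hBc i (Finset.mem_range.1 hi))
        simpa using this
      have a3 : S.card ≤ ((Finset.range m).biUnion E' ∪ (Finset.range ℓ).biUnion B).card :=
        Finset.card_le_card Finset.sdiff_subset
      have a4 := Finset.card_union_le ((Finset.range m).biUnion E') ((Finset.range ℓ).biUnion B)
      have a5 : m * k ≤ ℓ * k := Nat.mul_le_mul_right k (by omega)
      nlinarith
    obtain ⟨X, hXF, hBX, hXS⟩ := hstrong m (by omega) S hS Finset.sdiff_disjoint
    refine ⟨Function.update E' m X, ?_, ?_⟩
    · intro i hi
      by_cases him : i = m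
      · subst him
        rw [Function.update_self]
        refine ⟨hXF, hBX, ?_⟩
        intro j hj
        apply Finset.disjoint_of_subset_right _ hXS
        intro x hx
        simp only [Finset.mem_sdiff] at hx
        simp only [S, Finset.mem_sdiff, Finset.mem_union, Finset.mem_biUnion, Finset.mem_range]
        exact ⟨Or.inr ⟨j, hj, hx.1⟩, hx.2⟩
      · rw [Function.update_of_ne him]
        exact h1 i (by omega)
    · intro i hi j hj hij
      have him : i ≠ m := by omega
      rw [Function.update_of_ne him]
      by_cases hjm : j = m
      · subst hjm
        rw [Function.update_self]
        apply Finset.disjoint_of_subset_right _ hXS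
        intro x hx
        simp only [Finset.mem_sdiff] at hx
        simp only [S, Finset.mem_sdiff, Finset.mem_union, Finset.mem_biUnion, Finset.mem_range]
        exact ⟨Or.inl ⟨i, hij, hx.1⟩, hx.2⟩
      · rw [Function.update_of_ne hjm]
        exact h2 i (by omega) j (by omega) hij

lemma rt_embed {α : Type} [DecidableEq α] (k ℓ : ℕ) (C : Finset (Finset α))
    (hC : IsLinearCycle k ℓ C) (F : Finset (Finset ℕ)) (hFk : ∀ E ∈ F, E.card = k)
    (B : ℕ → Finset ℕ) (hBc : ∀ i < ℓ, (B i).card ≤ 3)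
    (hstrong : ∀ i < ℓ, ∀ S : Finset ℕ, S.card ≤ (k + 3) * ℓ → Disjoint S (B i) →
      ∃ E ∈ F, B i ⊆ E ∧ Disjoint E S)
    (hpair : ∀ i < ℓ, ∀ j < ℓ, i ≠ j → (B i ∩ B j).card = if RtCons ℓ i j then 1 else 0)
    (htriple : RtTriple ℓ B) : ¬ HFree C F := by
  obtain ⟨E, c1, c2, c3, c4, c5, c6⟩ := hC
  obtain ⟨E', h1, h2⟩ := rt_greedy k ℓ F hFk B hBc hstrong ℓ le_rfl
  have hintr' : ∀ i < ℓ, ∀ j < ℓ, i < j → E' i ∩ E' j = B i ∩ B j := by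
    intro i hi j hj hij
    ext x
    simp only [Finset.mem_inter]
    constructor
    · rintro ⟨ha, hb⟩
      have hBj : x ∈ B j := by
        by_contra hcon
        exact Finset.disjoint_left.1 (h2 i hi j hj hij) hb (Finset.mem_sdiff.2 ⟨ha, hcon⟩)
      refine ⟨?_, hBj⟩
      by_contra hcon
      exact Finset.disjoint_left.1 ((h1 i hi).2.2 j hj) ha (Finset.mem_sdiff.2 ⟨hBj, hcon⟩)
    · rintro ⟨ha, hb⟩
      exact ⟨(h1 i hi).2.1 ha, (h1 j hj).2.1 hb⟩
  have hintr : ∀ i < ℓ, ∀ j < ℓ, i ≠ j → E' i ∩ E' j = B i ∩ B j := by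
    intro i hi j hj hij
    rcases lt_or_gt_of_ne hij with h | h
    · exact hintr' i hi j hj h
    · rw [Finset.inter_comm, Finset.inter_comm (B i)]
      exact hintr' j hj i hi h
  obtain ⟨φ, hφ, hφ2⟩ := rt_iso ℓ E E' (by
      intro i hi
      rw [c1 i hi, hFk _ (h1 i hi).1])
    (by
      intro i hi j hj hij
      rw [hintr i hi j hj hij, hpair i hi j hj hij]
      convert lc_pair ℓ E c3 c5 i j hi hj hij)
    (lc_triple ℓ E c3 c4 c5)
    (by
      intro i hi j hj m hm hij him hjm x hxi hxj hxm
      have e1 : x ∈ B i ∩ B j := by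
        rw [← hintr i hi j hj hij]; exact Finset.mem_inter.2 ⟨hxi, hxj⟩
      have e2 : x ∈ B i ∩ B m := by
        rw [← hintr i hi m hm him]; exact Finset.mem_inter.2 ⟨hxi, hxm⟩
      rw [Finset.mem_inter] at e1 e2
      exact htriple i hi j hj m hm hij him hjm x e1.1 e1.2 e2.2)
  intro hfree
  apply hfree ((Finset.range ℓ).image E')
  · intro X hX
    obtain ⟨i, hi, rfl⟩ := Finset.mem_image.1 hX
    exact (h1 i (Finset.mem_range.1 hi)).1
  · refine ⟨φ, ?_, ?_⟩
    · apply hφ.mono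
      intro x hx
      rw [c6] at hx
      simp only [vertexSet, Finset.coe_sort_coe, Finset.mem_coe, Finset.mem_sup, Finset.mem_image,
        Finset.mem_range, id] at hx
      obtain ⟨X, ⟨i, hi, rfl⟩, hx⟩ := hx
      exact ⟨i, hi, hx⟩
    · rw [c6, Finset.image_image]
      apply Finset.image_congr
      intro i hi
      have hi' : i < ℓ := by simpa using hi
      simp only [Function.comp]
      rw [hφ2 i hi']

/-- Strong sets: no small set covers the link. -/
def RtStrong (s : ℕ) (F : Finset (Finset ℕ)) (B : Finset ℕ) : Prop :=
  ∀ S : Finset ℕ, S.card ≤ s → Disjoint S B → ∃ E ∈ F, B ⊆ E ∧ Disjoint E S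

lemma rt_cycle {α : Type} [DecidableEq α] (k ℓ : ℕ) (hℓ : 3 ≤ ℓ) (C : Finset (Finset α))
    (hC : IsLinearCycle k ℓ C) (F : Finset (Finset ℕ)) (hFk : ∀ E ∈ F, E.card = k)
    (v : ℕ → ℕ) (U : Finset ℕ) (hU : U.card ≤ 1)
    (hv : ∀ i < ℓ, ∀ j < ℓ, v i = v j → i = j)
    (hvU : ∀ i < ℓ, v i ∉ U)
    (h1 : ∀ i, i + 1 < ℓ → RtStrong ((k + 3) * ℓ) F {v i, v (i + 1)})
    (h2 : RtStrong ((k + 3) * ℓ) F ({v (ℓ - 1), v 0} ∪ U)) : ¬ HFree C F := by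
  let B : ℕ → Finset ℕ := fun i => {v i, v ((i + 1) % ℓ)} ∪ (if i + 1 = ℓ then U else ∅)
  have hBmem : ∀ i x, x ∈ B i ↔ x = v i ∨ x = v ((i + 1) % ℓ) ∨ (i + 1 = ℓ ∧ x ∈ U) := by
    intro i x
    simp only [B, Finset.mem_union, Finset.mem_insert, Finset.mem_singleton]
    split_ifs with h <;> simp [h, or_assoc]
  have hlt : ∀ i, (i + 1) % ℓ < ℓ := fun i => Nat.mod_lt _ (by omega)
  have hx : ∀ i < ℓ, ∀ j < ℓ, i ≠ j → ∀ x, x ∈ B i → x ∈ B j →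
      (x = v j ∧ (i + 1) % ℓ = j) ∨ (x = v i ∧ (j + 1) % ℓ = i) := by
    intro i hi j hj hij x hxi hxj
    rw [hBmem] at hxi hxj
    rcases hxi with rfl | rfl | ⟨a, b⟩
    · rcases hxj with h | h | ⟨_, h⟩
      · exact absurd (hv _ hi _ hj h) hij
      · right; exact ⟨rfl, (hv _ hi _ (hlt j) h).symm⟩
      · exact absurd h (hvU i hi)
    · rcases hxj with h | h | ⟨_, h⟩
      · left; exact ⟨h, hv _ (hlt i) _ hj h⟩
      · have := hv _ (hlt i) _ (hlt j) h
        rcases rt_mod ℓ i hi with ⟨_, q⟩ | ⟨_, q⟩ <;> rcases rt_mod ℓ j hj with ⟨_, q'⟩ | ⟨_, q'⟩ <;>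
          omega
      · exact absurd h (hvU _ (hlt i))
    · rcases hxj with rfl | rfl | ⟨h, _⟩
      · exact absurd b (hvU j hj)
      · exact absurd b (hvU _ (hlt j))
      · omega
  apply rt_embed k ℓ C hC F hFk B
  · intro i _
    simp only [B]
    refine (Finset.card_union_le _ _).trans ?_
    have := Finset.card_le_two (a := v i) (b := v ((i + 1) % ℓ))
    split_ifs
    · omega
    · simp only [Finset.card_empty]; omega
  · intro i hi
    rcases rt_mod ℓ i hi with ⟨a, b⟩ | ⟨a, b⟩
    · have : B i = {v i, v (i + 1)} := by
        simp only [B, b]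
        rw [if_neg (by omega), Finset.union_empty]
      rw [this]
      exact h1 i a
    · have : B i = {v (ℓ - 1), v 0} ∪ U := by
        simp only [B, b]
        rw [if_pos a]
        have : i = ℓ - 1 := by omega
        rw [this]
      rw [this]
      exact h2
  · intro i hi j hj hij
    have main : ∀ i < ℓ, ∀ j < ℓ, i ≠ j → (i + 1) % ℓ = j → (B i ∩ B j).card = 1 := by
      intro i hi j hj hij h
      rw [Finset.card_eq_one]
      refine ⟨v j, ?_⟩
      ext x
      rw [Finset.mem_inter, Finset.mem_singleton]
      constructor
      · rintro ⟨a, b⟩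
        rcases hx i hi j hj hij x a b with q | q
        · exact q.1
        · exfalso
          rcases rt_mod ℓ i hi with ⟨_, q1⟩ | ⟨_, q1⟩ <;>
            rcases rt_mod ℓ j hj with ⟨_, q2⟩ | ⟨_, q2⟩ <;> omega
      · rintro rfl
        rw [hBmem, hBmem]
        refine ⟨Or.inr (Or.inl ?_), Or.inl rfl⟩
        rw [h]
    split_ifs with h
    · rcases h with h | h
      · exact main i hi j hj hij h
      · rw [Finset.inter_comm]
        exact main j hj i hi hij.symm h
    · rw [Finset.card_eq_zero, Finset.eq_empty_iff_forall_notMem]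
      intro x hxx
      rw [Finset.mem_inter] at hxx
      apply h
      rcases hx i hi j hj hij x hxx.1 hxx.2 with q | q
      · exact Or.inl q.2
      · exact Or.inr q.2
  · intro i hi j hj m hm hij him hjm x hxi hxj hxm
    have q1 := hx i hi j hj hij x hxi hxj
    have q2 := hx i hi m hm him x hxi hxm
    have q3 := hx j hj m hm hjm x hxj hxm
    have r1 : v i = v j → i = j := hv i hi j hj
    have r2 : v i = v m → i = m := hv i hi m hm
    have r3 : v j = v m → j = m := hv j hj m hm
    grind


/-! ### Dense graphs, cycles and triangles -/

lemma rt_seq (X : Finset ℕ) (a : ℕ) (ha : a ≤ X.card) :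
    ∃ x : ℕ → ℕ, (∀ i < a, x i ∈ X) ∧ ∀ i < a, ∀ j < a, x i = x j → i = j := by
  refine ⟨fun i => if h : i < X.card then (X.equivFin.symm ⟨i, h⟩ : ℕ) else 0, ?_, ?_⟩
  · intro i hi
    simp only [dif_pos (lt_of_lt_of_le hi ha)]
    exact (X.equivFin.symm _).2
  · intro i hi j hj h
    simp only [dif_pos (lt_of_lt_of_le hi ha), dif_pos (lt_of_lt_of_le hj ha)] at h
    have := X.equivFin.symm.injective (Subtype.ext h)
    simpa using this

lemma rt_seq_one (X : Finset ℕ) (a : ℕ) (ha : a ≤ X.card) (p : ℕ) (hp : p ∈ X) :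
    ∃ x : ℕ → ℕ, (∀ i < a, x i ∈ X) ∧ (∀ i < a, ∀ j < a, x i = x j → i = j) ∧ x 0 = p := by
  have hc := Finset.card_erase_of_mem hp
  obtain ⟨z, hz1, hz2⟩ := rt_seq (X.erase p) (a - 1) (by omega)
  refine ⟨fun i => if i = 0 then p else z (i - 1), ?_, ?_, by simp⟩
  · intro i hi
    by_cases h : i = 0
    · simp [h, hp]
    · simp only [h, if_false]
      exact Finset.mem_of_mem_erase (hz1 (i - 1) (by omega))
  · intro i hi j hj h
    by_cases h1 : i = 0 <;> by_cases h2 : j = 0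
    · omega
    · simp only [h1, h2, if_true, if_false] at h
      exact absurd h.symm (Finset.ne_of_mem_erase (hz1 (j - 1) (by omega)))
    · simp only [h1, h2, if_true, if_false] at h
      exact absurd h (Finset.ne_of_mem_erase (hz1 (i - 1) (by omega)))
    · simp only [h1, h2, if_false] at h
      have := hz2 (i - 1) (by omega) (j - 1) (by omega) h
      omega

lemma rt_seq_two (X : Finset ℕ) (a : ℕ) (h2 : 2 ≤ a) (ha : a ≤ X.card) (p q : ℕ) (hp : p ∈ X)
    (hq : q ∈ X) (hpq : p ≠ q) :
    ∃ x : ℕ → ℕ, (∀ i < a, x i ∈ X) ∧ (∀ i < a, ∀ j < a, x i = x j → i = j) ∧ x 0 = p ∧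
      x (a - 1) = q := by
  have hc := Finset.card_erase_of_mem hq
  obtain ⟨z, hz1, hz2, hz3⟩ := rt_seq_one (X.erase q) (a - 1) (by omega) p
    (Finset.mem_erase.2 ⟨hpq, hp⟩)
  refine ⟨fun i => if i = a - 1 then q else z i, ?_, ?_, ?_, by simp⟩
  · intro i hi
    by_cases h : i = a - 1
    · simp [h, hq]
    · simp only [h, if_false]
      exact Finset.mem_of_mem_erase (hz1 i (by omega))
  · intro i hi j hj h
    by_cases h1 : i = a - 1 <;> by_cases h2 : j = a - 1
    · omega
    · simp only [h1, h2, if_true, if_false] at h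
      exact absurd h.symm (Finset.ne_of_mem_erase (hz1 j (by omega)))
    · simp only [h1, h2, if_true, if_false] at h
      exact absurd h (Finset.ne_of_mem_erase (hz1 i (by omega)))
    · simp only [h1, h2, if_false] at h
      exact hz2 i (by omega) j (by omega) h
  · have : (0 : ℕ) ≠ a - 1 := by omega
    simp only [this, if_false, hz3]

/-- alternating sequence -/
def rtAlt (x y : ℕ → ℕ) (i : ℕ) : ℕ := if i % 2 = 0 then x (i / 2) else y (i / 2)

lemma rtAlt_inj (x y : ℕ → ℕ) (a : ℕ) (hx : ∀ i < a, ∀ j < a, x i = x j → i = j)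
    (hy : ∀ i < a, ∀ j < a, y i = y j → i = j) (hxy : ∀ i < a, ∀ j < a, x i ≠ y j) :
    ∀ i < 2 * a, ∀ j < 2 * a, rtAlt x y i = rtAlt x y j → i = j := by
  intro i hi j hj h
  unfold rtAlt at h
  split_ifs at h with h1 h2 h2
  · have := hx (i / 2) (by omega) (j / 2) (by omega) h
    omega
  · exact absurd h (hxy (i / 2) (by omega) (j / 2) (by omega))
  · exact absurd h.symm (hxy (j / 2) (by omega) (i / 2) (by omega))
  · have := hy (i / 2) (by omega) (j / 2) (by omega) h
    omega

lemma rtAlt_adj (Γ : ℕ → ℕ → Prop) (hs : ∀ a b, Γ a b → Γ b a) (x y : ℕ → ℕ) (a : ℕ)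
    (hxy : ∀ i < a, ∀ j < a, Γ (x i) (y j)) :
    ∀ i, i + 1 < 2 * a → Γ (rtAlt x y i) (rtAlt x y (i + 1)) := by
  intro i hi
  unfold rtAlt
  by_cases h : i % 2 = 0
  · rw [if_pos h, if_neg (by omega)]
    exact hxy _ (by omega) _ (by omega)
  · rw [if_neg h, if_pos (by omega)]
    exact hs _ _ (hxy _ (by omega) _ (by omega))

/-- `Γ` has an `ℓ`-cycle. -/
def RtCyc (ℓ : ℕ) (Γ : ℕ → ℕ → Prop) : Prop :=
  ∃ v : ℕ → ℕ, (∀ i < ℓ, ∀ j < ℓ, v i = v j → i = j) ∧ (∀ i, i + 1 < ℓ → Γ (v i) (v (i + 1))) ∧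
    Γ (v (ℓ - 1)) (v 0)

lemma rt_evencycle (Γ : ℕ → ℕ → Prop) (hs : ∀ a b, Γ a b → Γ b a) (hirr : ∀ a, ¬ Γ a a)
    (X Y : Finset ℕ) (a : ℕ) (ha : 1 ≤ a) (hX : a ≤ X.card) (hY : a ≤ Y.card)
    (hXY : ∀ x ∈ X, ∀ y ∈ Y, Γ x y) : RtCyc (2 * a) Γ := by
  obtain ⟨x, hx1, hx2⟩ := rt_seq X a hX
  obtain ⟨y, hy1, hy2⟩ := rt_seq Y a hY
  refine ⟨rtAlt x y, rtAlt_inj x y a hx2 hy2 ?_, rtAlt_adj Γ hs x y a ?_, ?_⟩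
  · intro i hi j hj h
    have := hXY _ (hx1 i hi) _ (hy1 j hj)
    rw [h] at this
    exact hirr _ this
  · intro i hi j hj
    exact hXY _ (hx1 i hi) _ (hy1 j hj)
  · unfold rtAlt
    rw [if_neg (by omega), if_pos (by omega)]
    exact hs _ _ (hXY _ (hx1 _ (by omega)) _ (hy1 _ (by omega)))

lemma rt_kst (R : ℕ) (η : ℝ) (hη : 0 < η) : ∃ n0 : ℕ, ∀ V : Finset ℕ, n0 ≤ V.card →
    ∀ Γ : ℕ → ℕ → Prop,
      η * (V.card : ℝ) ^ 2 ≤ (((V ×ˢ V).filter fun q => Γ q.1 q.2).card : ℝ) →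
      ∃ X Y : Finset ℕ, X ⊆ V ∧ Y ⊆ V ∧ R ≤ X.card ∧ R ≤ Y.card ∧ ∀ y ∈ Y, ∀ x ∈ X, Γ y x := by
  obtain ⟨n1, hn1⟩ := exists_nat_gt (4 * R / η)
  obtain ⟨n2, hn2⟩ := exists_nat_gt (R * R.factorial * (4 / η) ^ R * (2 / η))
  refine ⟨max n1 n2 + 1, ?_⟩
  intro V hV Γ hΓ
  set n := V.card with hn
  have hn1' : 4 * R / η < n := lt_of_lt_of_le hn1 (by exact_mod_cast (by omega))
  have hn2' : R * R.factorial * (4 / η) ^ R * (2 / η) < n :=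
    lt_of_lt_of_le hn2 (by exact_mod_cast (by omega))
  have hnpos : (0 : ℝ) < n := by
    have : 0 < n := by omega
    exact_mod_cast this
  by_contra hcon
  push Not at hcon
  let d : ℕ → Finset ℕ := fun v => V.filter fun x => Γ v x
  have hsum : (((V ×ˢ V).filter fun q => Γ q.1 q.2).card) = ∑ v ∈ V, (d v).card := by
    rw [Finset.card_filter, Finset.sum_product]
    apply Finset.sum_congr rfl
    intro v _
    simp only [d, Finset.card_filter]
  have hdc : ∑ v ∈ V, ((d v).powersetCard R).card ≤ (n.choose R) * R := by
    have : ∑ v ∈ V, ((d v).powersetCard R).card =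
        ∑ S ∈ V.powersetCard R, (V.filter fun v => S ⊆ d v).card := by
      have e1 : ∀ v, (d v).powersetCard R = (V.powersetCard R).filter fun S => S ⊆ d v := by
        intro v
        ext S
        simp only [Finset.mem_powersetCard, Finset.mem_filter]
        constructor
        · rintro ⟨a, b⟩
          exact ⟨⟨a.trans (Finset.filter_subset _ _), b⟩, a⟩
        · rintro ⟨⟨a, b⟩, c⟩
          exact ⟨c, b⟩
      simp_rw [e1, Finset.card_filter]
      exact Finset.sum_comm
    rw [this]
    refine (Finset.sum_le_card_nsmul _ _ R ?_).trans ?_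
    · intro S hS
      rw [Finset.mem_powersetCard] at hS
      by_contra hlt
      push Not at hlt
      obtain ⟨y, hy, x, hx, hΓxy⟩ := hcon S (V.filter fun v => S ⊆ d v) hS.1
        (Finset.filter_subset _ _) hS.2.ge hlt.le
      have := (Finset.mem_filter.1 hy).2 hx
      exact hΓxy (Finset.mem_filter.1 this).2
    · rw [Finset.card_powersetCard, smul_eq_mul]
  let Hi : Finset ℕ := V.filter fun v => η / 2 * n ≤ ((d v).card : ℝ)
  have hHi : η / 2 * n ≤ (Hi.card : ℝ) := by
    have e1 : (∑ v ∈ V, ((d v).card : ℝ)) ≤ ∑ v ∈ V, ((if v ∈ Hi then (n : ℝ) else 0) + η / 2 * n) := by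
      apply Finset.sum_le_sum
      intro v hv
      by_cases h : v ∈ Hi
      · rw [if_pos h]
        have : ((d v).card : ℝ) ≤ n := by exact_mod_cast Finset.card_le_card (Finset.filter_subset _ _)
        have : 0 < η / 2 * n := by positivity
        linarith
      · rw [if_neg h]
        have : ¬ (η / 2 * n ≤ ((d v).card : ℝ)) := fun h' => h (Finset.mem_filter.2 ⟨hv, h'⟩)
        linarith
    rw [Finset.sum_add_distrib, Finset.sum_ite_mem, Finset.inter_eq_right.2 (Finset.filter_subset _ _),
      Finset.sum_const, Finset.sum_const, nsmul_eq_mul, nsmul_eq_mul, ← hn] at e1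
    rw [hsum] at hΓ
    push_cast at hΓ
    have : η / 2 * n * n ≤ (Hi.card : ℝ) * n := by nlinarith
    exact le_of_mul_le_mul_right this hnpos
  have hlow : ∀ v ∈ Hi, (η / 4 * n) ^ R / R.factorial ≤ (((d v).powersetCard R).card : ℝ) := by
    intro v hv
    have h1 := (Finset.mem_filter.1 hv).2
    rw [Finset.card_powersetCard]
    refine le_trans ?_ (Nat.pow_le_choose (α := ℝ) R (d v).card)
    gcongr
    rw [div_lt_iff₀ hη] at hn1'
    have h2 : (R : ℝ) ≤ η / 4 * n := by linarith
    have h3 : ((d v).card : ℝ) - R ≤ (((d v).card + 1 - R : ℕ) : ℝ) := by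
      have : (d v).card ≤ ((d v).card + 1 - R) + R := by omega
      have : ((d v).card : ℝ) ≤ (((d v).card + 1 - R : ℕ) : ℝ) + R := by exact_mod_cast this
      linarith
    linarith
  have hfin : (η / 2 * n) * ((η / 4 * n) ^ R / R.factorial) ≤ (n : ℝ) ^ R * R := by
    calc (η / 2 * n) * ((η / 4 * n) ^ R / R.factorial)
        ≤ Hi.card * ((η / 4 * n) ^ R / R.factorial) := by gcongr
      _ = ∑ v ∈ Hi, (η / 4 * n) ^ R / R.factorial := by rw [Finset.sum_const, nsmul_eq_mul]
      _ ≤ ∑ v ∈ Hi, (((d v).powersetCard R).card : ℝ) := Finset.sum_le_sum hlow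
      _ ≤ ∑ v ∈ V, (((d v).powersetCard R).card : ℝ) :=
        Finset.sum_le_sum_of_subset_of_nonneg (Finset.filter_subset _ _) (by intros; positivity)
      _ ≤ (n.choose R : ℝ) * R := by exact_mod_cast hdc
      _ ≤ (n : ℝ) ^ R * R := by
        gcongr
        exact_mod_cast Nat.choose_le_pow n R
  have hfac : (0 : ℝ) < R.factorial := by exact_mod_cast R.factorial_pos
  have hkey : (n : ℝ) * (η / 2) * ((η / 4) ^ R) ≤ R * R.factorial := by
    rw [mul_pow, mul_div_assoc', div_le_iff₀ hfac] at hfin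
    have hp : (0 : ℝ) < (n : ℝ) ^ R := by positivity
    apply le_of_mul_le_mul_right _ hp
    nlinarith
  have h4 : R * R.factorial * (4 / η) ^ R * (2 / η) * (η / 2) * ((η / 4) ^ R)
      = R * R.factorial := by
    have e1 : (4 / η) ^ R * (η / 4) ^ R = 1 := by
      rw [← mul_pow]
      have : (4 / η) * (η / 4) = 1 := by field_simp
      rw [this, one_pow]
    have e2 : (2 / η) * (η / 2) = 1 := by field_simp
    calc _ = (R * R.factorial : ℝ) * ((4 / η) ^ R * (η / 4) ^ R) * ((2 / η) * (η / 2)) := by ring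
      _ = _ := by rw [e1, e2]; ring
  have h5 : R * R.factorial * (4 / η) ^ R * (2 / η) * (η / 2) * ((η / 4) ^ R) <
      (n : ℝ) * (η / 2) * ((η / 4) ^ R) := by
    gcongr
  linarith

noncomputable def rtSh (T : Finset (Finset ℕ)) : Finset (Finset ℕ) :=
  T.biUnion fun S => S.powersetCard 2

lemma rtSh_mem (T : Finset (Finset ℕ)) (q : Finset ℕ) :
    q ∈ rtSh T ↔ q.card = 2 ∧ ∃ S ∈ T, q ⊆ S := by
  simp only [rtSh, Finset.mem_biUnion, Finset.mem_powersetCard]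
  constructor
  · rintro ⟨S, a, b, c⟩; exact ⟨c, S, a, b⟩
  · rintro ⟨c, S, a, b⟩; exact ⟨S, a, b, c⟩

lemma rt_degen (m : ℕ) : ∀ (c : ℕ) (T : Finset (Finset ℕ)), T.card = c →
    (∃ T' ⊆ T, T'.Nonempty ∧ ∀ q ∈ rtSh T', m ≤ (T'.filter fun S => q ⊆ S).card) ∨
      T.card ≤ m * (rtSh T).card := by
  intro c
  induction c using Nat.strong_induction_on with
  | _ c ih =>
    intro T hT
    by_cases h0 : T.Nonempty
    swap
    · right
      rw [Finset.not_nonempty_iff_eq_empty] at h0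
      simp [h0]
    by_cases h : ∀ q ∈ rtSh T, m ≤ (T.filter fun S => q ⊆ S).card
    · exact Or.inl ⟨T, subset_rfl, h0, h⟩
    · push Not at h
      obtain ⟨q, hq, hlt⟩ := h
      let T1 := T.filter fun S => ¬ q ⊆ S
      have hsplit : (T.filter fun S => q ⊆ S).card + T1.card = T.card :=
        Finset.card_filter_add_card_filter_not _
      have hpos : 0 < (T.filter fun S => q ⊆ S).card := by
        obtain ⟨_, S, hS, hqS⟩ := (rtSh_mem _ _).1 hq
        exact Finset.card_pos.2 ⟨S, Finset.mem_filter.2 ⟨hS, hqS⟩⟩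
      rcases ih T1.card (by omega) T1 rfl with ⟨T', h1, h2, h3⟩ | h1
      · exact Or.inl ⟨T', h1.trans (Finset.filter_subset _ _), h2, h3⟩
      · right
        have hsub : rtSh T1 ⊆ (rtSh T).erase q := by
          intro r hr
          obtain ⟨hc, S, hS, hrS⟩ := (rtSh_mem _ _).1 hr
          obtain ⟨hST, hqS⟩ := Finset.mem_filter.1 hS
          refine Finset.mem_erase.2 ⟨?_, (rtSh_mem _ _).2 ⟨hc, S, hST, hrS⟩⟩
          rintro rfl
          exact hqS hrS
        have hc := Finset.card_le_card hsub
        rw [Finset.card_erase_of_mem hq] at hc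
        have hp : 0 < (rtSh T).card := Finset.card_pos.2 ⟨q, hq⟩
        have : m * (rtSh T1).card ≤ m * ((rtSh T).card - 1) := Nat.mul_le_mul_left _ hc
        have e : m * ((rtSh T).card - 1) + m = m * (rtSh T).card := by
          obtain ⟨b, hb⟩ : ∃ b, (rtSh T).card = b + 1 := ⟨_, (Nat.succ_pred_eq_of_pos hp).symm⟩
          rw [hb]; simp; ring
        omega

lemma rt_growcycle (Γ : ℕ → ℕ → Prop) (ℓ : ℕ) (T : Finset (Finset ℕ)) (hne : T.Nonempty)
    (hT3 : ∀ S ∈ T, S.card = 3) (hTΓ : ∀ S ∈ T, ∀ a ∈ S, ∀ b ∈ S, a ≠ b → Γ a b)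
    (hcod : ∀ q ∈ rtSh T, ℓ ≤ (T.filter fun S => q ⊆ S).card) :
    ∀ j, 3 ≤ j → j ≤ ℓ → ∃ v : ℕ → ℕ, (∀ i < j, ∀ i' < j, v i = v i' → i = i') ∧
      (∀ i, i + 1 < j → Γ (v i) (v (i + 1))) ∧ Γ (v (j - 1)) (v 0) ∧ {v (j - 1), v 0} ∈ rtSh T := by
  intro j hj
  induction j, hj using Nat.le_induction with
  | base =>
    intro _
    obtain ⟨S, hS⟩ := hne
    obtain ⟨a, b, c, hab, hac, hbc, rfl⟩ := Finset.card_eq_three.1 (hT3 S hS)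
    refine ⟨fun i => if i = 0 then a else if i = 1 then b else c, ?_, ?_, ?_, ?_⟩
    · intro i hi i' hi' h
      interval_cases i <;> interval_cases i' <;> simp_all
    · intro i hi
      have : i < 2 := by omega
      interval_cases i
      · simpa using hTΓ _ hS a (by simp) b (by simp) hab
      · simpa using hTΓ _ hS b (by simp) c (by simp) hbc
    · simpa using hTΓ _ hS c (by simp) a (by simp) hac.symm
    · rw [rtSh_mem]
      refine ⟨?_, _, hS, ?_⟩
      · simpa using Finset.card_pair hac.symm
      · intro x hx
        simp at hx ⊢
        tauto
  | succ j hj ih =>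
    intro hjl
    obtain ⟨v, h1, h2, h3, h4⟩ := ih (by omega)
    have hc := hcod _ h4
    have hex : ∃ S ∈ T, {v (j - 1), v 0} ⊆ S ∧ ∀ i < j, S ≠ insert (v i) {v (j - 1), v 0} := by
      by_contra hcon
      push Not at hcon
      have hsub : (T.filter fun S => {v (j - 1), v 0} ⊆ S) ⊆
          (Finset.range j).image fun i => insert (v i) {v (j - 1), v 0} := by
        intro S hS
        obtain ⟨hST, hqS⟩ := Finset.mem_filter.1 hS
        obtain ⟨i, hi, e⟩ := hcon S hST hqS
        exact Finset.mem_image.2 ⟨i, Finset.mem_range.2 hi, e.symm⟩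
      have := (Finset.card_le_card hsub).trans Finset.card_image_le
      rw [Finset.card_range] at this
      omega
    obtain ⟨S, hS, hqS, hSi⟩ := hex
    have hne0 : v (j - 1) ≠ v 0 := by
      intro h
      have := h1 _ (by omega) _ (by omega) h
      omega
    have hcq : ({v (j - 1), v 0} : Finset ℕ).card = 2 := Finset.card_pair hne0
    have hcs : (S \ {v (j - 1), v 0}).card = 1 := by
      rw [Finset.card_sdiff_of_subset hqS, hT3 S hS, hcq]
    obtain ⟨z, hz⟩ := Finset.card_eq_one.1 hcs
    have hzm : z ∈ S \ {v (j - 1), v 0} := by rw [hz]; simp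
    have hSe : S = insert z {v (j - 1), v 0} := by
      rw [← Finset.sdiff_union_of_subset hqS, hz]; rfl
    have hzv : ∀ i < j, v i ≠ z := by
      intro i hi h
      exact hSi i hi (by rw [h]; exact hSe)
    have hzS : z ∈ S := (Finset.mem_sdiff.1 hzm).1
    have hv0S : v 0 ∈ S := hqS (by simp)
    have hvjS : v (j - 1) ∈ S := hqS (by simp)
    refine ⟨fun i => if i = j then z else v i, ?_, ?_, ?_, ?_⟩
    · intro i hi i' hi' h
      by_cases e1 : i = j <;> by_cases e2 : i' = j
      · omega
      · simp only [e1, e2, if_true, if_false] at h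
        exact absurd h.symm (hzv i' (by omega))
      · simp only [e1, e2, if_true, if_false] at h
        exact absurd h (hzv i (by omega))
      · simp only [e1, e2, if_false] at h
        exact h1 i (by omega) i' (by omega) h
    · intro i hi
      have e1 : i ≠ j := by omega
      by_cases e2 : i + 1 = j
      · simp only [e1, e2, if_true, if_false]
        have : i = j - 1 := by omega
        rw [this]
        exact hTΓ S hS _ hvjS _ hzS (hzv _ (by omega))
      · simp only [e1, e2, if_false]
        exact h2 i (by omega)
    · have : (0 : ℕ) ≠ j := by omega
      simp only [Nat.add_sub_cancel, if_true, this, if_false]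
      exact hTΓ S hS _ hzS _ hv0S (hzv 0 (by omega)).symm
    · have : (0 : ℕ) ≠ j := by omega
      simp only [Nat.add_sub_cancel, if_true, this, if_false]
      rw [rtSh_mem]
      refine ⟨Finset.card_pair (hzv 0 (by omega)).symm, S, hS, ?_⟩
      intro x hx
      simp only [Finset.mem_insert, Finset.mem_singleton] at hx
      rcases hx with rfl | rfl
      · exact hzS
      · exact hv0S

noncomputable def rtTri (Γ : ℕ → ℕ → Prop) (V : Finset ℕ) : Finset (Finset ℕ) :=
  (V.powersetCard 3).filter fun S => ∀ a ∈ S, ∀ b ∈ S, a ≠ b → Γ a b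

lemma rt_tri (ℓ : ℕ) (hℓ : 3 ≤ ℓ) (ε : ℝ) (hε : 0 < ε) : ∃ n0 : ℕ, ∀ V : Finset ℕ, n0 ≤ V.card →
    ∀ Γ : ℕ → ℕ → Prop, (∀ a b, Γ a b → Γ b a) → (∀ a, ¬ Γ a a) → ¬ RtCyc ℓ Γ →
      ((rtTri Γ V).card : ℝ) ≤ ε * (V.card : ℝ) ^ 2 := by
  have hℓ0 : (0 : ℝ) < ℓ := by
    have : 0 < ℓ := by omega
    exact_mod_cast this
  obtain ⟨n0, hn0⟩ := rt_kst ℓ (ε / ℓ) (by positivity)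
  refine ⟨n0, ?_⟩
  intro V hV Γ hs hirr hcyc
  by_contra hbig
  push Not at hbig
  have hT3 : ∀ S ∈ rtTri Γ V, S.card = 3 := by
    intro S hS
    exact (Finset.mem_powersetCard.1 (Finset.mem_filter.1 hS).1).2
  have hTΓ : ∀ S ∈ rtTri Γ V, ∀ a ∈ S, ∀ b ∈ S, a ≠ b → Γ a b := by
    intro S hS
    exact (Finset.mem_filter.1 hS).2
  have hTV : ∀ S ∈ rtTri Γ V, S ⊆ V := by
    intro S hS
    exact (Finset.mem_powersetCard.1 (Finset.mem_filter.1 hS).1).1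
  rcases rt_degen ℓ _ (rtTri Γ V) rfl with ⟨T', h1, h2, h3⟩ | h1
  · obtain ⟨v, a, b, c, _⟩ := rt_growcycle Γ ℓ T' h2 (fun S hS => hT3 S (h1 hS))
      (fun S hS => hTΓ S (h1 hS)) h3 ℓ hℓ le_rfl
    exact hcyc ⟨v, a, b, c⟩
  · let Γ' : ℕ → ℕ → Prop := fun a b => {a, b} ∈ rtSh (rtTri Γ V)
    have hΓ' : ∀ a b, Γ' a b → a ≠ b ∧ Γ a b := by
      intro a b h
      obtain ⟨hc, S, hS, hsub⟩ := (rtSh_mem _ _).1 h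
      have hab : a ≠ b := by
        rintro rfl
        simp at hc
      exact ⟨hab, hTΓ S hS a (hsub (by simp)) b (hsub (by simp)) hab⟩
    have hcount : (rtSh (rtTri Γ V)).card ≤ ((V ×ˢ V).filter fun q => Γ' q.1 q.2).card := by
      have : rtSh (rtTri Γ V) ⊆
          ((V ×ˢ V).filter fun q => Γ' q.1 q.2).image fun q => ({q.1, q.2} : Finset ℕ) := by
        intro q hq
        obtain ⟨hc, S, hS, hsub⟩ := (rtSh_mem _ _).1 hq
        obtain ⟨a, b, hab, rfl⟩ := Finset.card_eq_two.1 hc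
        refine Finset.mem_image.2 ⟨(a, b), Finset.mem_filter.2 ⟨Finset.mem_product.2 ⟨?_, ?_⟩, hq⟩, rfl⟩
        · exact hTV S hS (hsub (by simp))
        · exact hTV S hS (hsub (by simp))
      exact (Finset.card_le_card this).trans Finset.card_image_le
    have hdense : ε / ℓ * (V.card : ℝ) ^ 2 ≤ (((V ×ˢ V).filter fun q => Γ' q.1 q.2).card : ℝ) := by
      have h1' : ((rtTri Γ V).card : ℝ) ≤ ℓ * ((rtSh (rtTri Γ V)).card : ℝ) := by exact_mod_cast h1
      have h2' : ((rtSh (rtTri Γ V)).card : ℝ) ≤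
        (((V ×ˢ V).filter fun q => Γ' q.1 q.2).card : ℝ) := by exact_mod_cast hcount
      rw [div_mul_eq_mul_div, div_le_iff₀ hℓ0]
      nlinarith
    obtain ⟨X, Y, _, _, hX, hY, hXY⟩ := hn0 V hV Γ' (by convert hdense)
    rcases Nat.even_or_odd' ℓ with ⟨a, ha | ha⟩
    · apply hcyc
      rw [ha]
      exact rt_evencycle Γ hs hirr X Y a (by omega) (by omega) (by omega)
        (fun x hx y hy => hs _ _ (hΓ' _ _ (hXY y hy x hx)).2)
    · obtain ⟨x0, hx0⟩ : X.Nonempty := Finset.card_pos.1 (by omega)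
      obtain ⟨y0, hy0⟩ : Y.Nonempty := Finset.card_pos.1 (by omega)
      obtain ⟨hc, S, hS, hsub⟩ := (rtSh_mem _ _).1 (hXY y0 hy0 x0 hx0)
      have hcs : (S \ {y0, x0}).card = 1 := by
        rw [Finset.card_sdiff_of_subset hsub, hT3 S hS, hc]
      obtain ⟨z, hz⟩ := Finset.card_eq_one.1 hcs
      have hzm : z ∈ S \ {y0, x0} := by rw [hz]; simp
      simp only [Finset.mem_sdiff, Finset.mem_insert, Finset.mem_singleton, not_or] at hzm
      have hcX : X.card - 1 ≤ (X.erase z).card := Finset.pred_card_le_card_erase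
      have hcY : Y.card - 1 ≤ (Y.erase z).card := Finset.pred_card_le_card_erase
      obtain ⟨x, x1, x2, x3⟩ := rt_seq_one (X.erase z) a (by omega) x0
        (Finset.mem_erase.2 ⟨fun h => hzm.2.2 h.symm, hx0⟩)
      obtain ⟨y, y1, y2, y3⟩ := rt_seq_one (Y.erase z) a (by omega) y0
        (Finset.mem_erase.2 ⟨fun h => hzm.2.1 h.symm, hy0⟩)
      let y' : ℕ → ℕ := fun i => y (a - 1 - i)
      have hadj : ∀ i < a, ∀ j < a, Γ (x i) (y' j) := by
        intro i hi j hj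
        exact hs _ _ (hΓ' _ _ (hXY _ (Finset.mem_of_mem_erase (y1 (a - 1 - j) (by omega)))
          _ (Finset.mem_of_mem_erase (x1 i hi)))).2
      have hinj := rtAlt_inj x y' a x2 (by
        intro i hi j hj h
        have := y2 (a - 1 - i) (by omega) (a - 1 - j) (by omega) h
        omega) (by
        intro i hi j hj h
        have := hadj i hi j hj
        rw [h] at this
        exact hirr _ this)
      have had := rtAlt_adj Γ hs x y' a hadj
      have hzalt : ∀ i < 2 * a, rtAlt x y' i ≠ z := by
        intro i hi
        unfold rtAlt
        split_ifs
        · exact Finset.ne_of_mem_erase (x1 _ (by omega))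
        · exact Finset.ne_of_mem_erase (y1 _ (by omega))
      apply hcyc
      refine ⟨fun i => if i = 2 * a then z else rtAlt x y' i, ?_, ?_, ?_⟩
      · intro i hi i' hi' h
        by_cases e1 : i = 2 * a <;> by_cases e2 : i' = 2 * a
        · omega
        · simp only [e1, e2, if_true, if_false] at h
          exact absurd h.symm (hzalt i' (by omega))
        · simp only [e1, e2, if_true, if_false] at h
          exact absurd h (hzalt i (by omega))
        · simp only [e1, e2, if_false] at h
          exact hinj i (by omega) i' (by omega) h
      · intro i hi
        have e1 : i ≠ 2 * a := by omega
        by_cases e2 : i + 1 = 2 * a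
        · simp only [e1, e2, if_true, if_false]
          have : rtAlt x y' i = y0 := by
            unfold rtAlt
            rw [if_neg (by omega)]
            simp only [y']
            rw [← y3]
            congr 1
            omega
          rw [this]
          exact hTΓ S hS _ (hsub (by simp)) _ hzm.1 (Ne.symm hzm.2.1)
        · simp only [e1, e2, if_false]
          exact had i (by omega)
      · have e1 : ℓ - 1 = 2 * a := by omega
        have e2 : (0 : ℕ) ≠ 2 * a := by omega
        simp only [e1, if_true, e2, if_false]
        have : rtAlt x y' 0 = x0 := by
          unfold rtAlt
          simpa using x3
        rw [this]
        exact hTΓ S hS _ hzm.1 _ (hsub (by simp)) hzm.2.2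



lemma rt_cnt_one (V B : Finset ℕ) (k b : ℕ) (hB : B.card = b) :
    ((V.powersetCard k).filter fun E => B ⊆ E).card ≤ (V \ B).card.choose (k - b) := by
  rw [← Finset.card_powersetCard]
  apply Finset.card_le_card_of_injOn (fun E => E \ B)
  · intro E hE
    simp only [Finset.coe_filter, Set.mem_setOf_eq, Finset.mem_powersetCard] at hE
    simp only [Finset.mem_coe, Finset.mem_powersetCard]
    refine ⟨Finset.sdiff_subset_sdiff hE.1.1 le_rfl, ?_⟩
    rw [Finset.card_sdiff_of_subset hE.2, hE.1.2, hB]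
  · intro E hE E' hE' h
    simp only [Finset.coe_filter, Set.mem_setOf_eq, Finset.mem_powersetCard] at hE hE'
    simp only at h
    rw [← Finset.sdiff_union_of_subset hE.2, ← Finset.sdiff_union_of_subset hE'.2, h]

lemma rt_cnt (V : Finset ℕ) (𝓑 : Finset (Finset ℕ)) (k b : ℕ) (hB : ∀ B ∈ 𝓑, B.card = b) :
    ((V.powersetCard k).filter fun E => ∃ B ∈ 𝓑, B ⊆ E).card ≤ 𝓑.card * V.card ^ (k - b) := by
  have h1 : ((V.powersetCard k).filter fun E => ∃ B ∈ 𝓑, B ⊆ E) ⊆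
      𝓑.biUnion fun B => (V.powersetCard k).filter fun E => B ⊆ E := by
    intro E hE
    rw [Finset.mem_filter] at hE
    obtain ⟨h, B, hB, hBE⟩ := hE
    rw [Finset.mem_biUnion]
    exact ⟨B, hB, Finset.mem_filter.2 ⟨h, hBE⟩⟩
  refine (Finset.card_le_card h1).trans ?_
  apply Finset.card_biUnion_le_card_mul
  intro B hB'
  refine (rt_cnt_one V B k b (hB B hB')).trans ?_
  refine (Nat.choose_le_pow _ _).trans ?_
  exact Nat.pow_le_pow_left (Finset.card_le_card Finset.sdiff_subset) _

/-- degenerate edges with two independent colours -/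
def RtB (W : ℕ → ℕ → Finset ℕ) (E : Finset ℕ) : Prop :=
  ∃ a ∈ E, ∃ b ∈ E, ∃ x ∈ E, ∃ y ∈ E, ∃ c ∈ E, ∃ z ∈ E, c ∈ W a b ∧ z ∈ W x y ∧ c ≠ z ∧ c ≠ x ∧ c ≠ y

lemma rt_cntB (V : Finset ℕ) (k s : ℕ) (hk : 5 ≤ k) (W : ℕ → ℕ → Finset ℕ)
    (hW : ∀ a b, (W a b).card ≤ s) (hWa : ∀ a b, a ∉ W a b) (hWb : ∀ a b, b ∉ W a b) :
    ((V.powersetCard k).filter (RtB W)).card ≤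
      V.card ^ (k - 2) * (k * (k * (s * (k * (k * s))))) := by
  have h1 : ((V.powersetCard k).filter (RtB W)) ⊆
      (V.powersetCard (k - 2)).biUnion fun A => A.biUnion fun x => A.biUnion fun y =>
        (W x y).biUnion fun z => (insert z A).biUnion fun a => (insert z A).biUnion fun b =>
          (W a b).image fun c => insert c (insert z A) := by
    intro E hE
    rw [Finset.mem_filter, Finset.mem_powersetCard] at hE
    obtain ⟨⟨hEV, hEk⟩, a, ha, b, hb, x, hx, y, hy, c, hc, z, hz, hcab, hzxy, hcz, hcx, hcy⟩ := hE
    have hxz : x ≠ z := fun h => hWa x y (h ▸ hzxy)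
    have hyz : y ≠ z := fun h => hWb x y (h ▸ hzxy)
    have hac : a ≠ c := fun h => hWa a b (h ▸ hcab)
    have hbc : b ≠ c := fun h => hWb a b (h ▸ hcab)
    have e1 : insert z ((E.erase c).erase z) = E.erase c :=
      Finset.insert_erase (Finset.mem_erase.2 ⟨hcz.symm, hz⟩)
    simp only [Finset.mem_biUnion, Finset.mem_image]
    refine ⟨(E.erase c).erase z, ?_, x, ?_, y, ?_, z, hzxy, a, ?_, b, ?_, c, hcab, ?_⟩
    · rw [Finset.mem_powersetCard]
      refine ⟨(Finset.erase_subset _ _).trans ((Finset.erase_subset _ _).trans hEV), ?_⟩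
      rw [Finset.card_erase_of_mem (Finset.mem_erase.2 ⟨hcz.symm, hz⟩), Finset.card_erase_of_mem hc, hEk]
      omega
    · simp [hxz, hcx.symm, hx]
    · simp [hyz, hcy.symm, hy]
    · rw [e1]; simp [hac, ha]
    · rw [e1]; simp [hbc, hb]
    · rw [e1]; exact Finset.insert_erase hc
  refine (Finset.card_le_card h1).trans ?_
  refine (Finset.card_biUnion_le_card_mul _ _ (k * (k * (s * (k * (k * s))))) ?_).trans ?_
  · intro A hA
    rw [Finset.mem_powersetCard] at hA
    have hAk : A.card ≤ k := by omega
    refine (Finset.card_biUnion_le_card_mul _ _ (k * (s * (k * (k * s)))) ?_).trans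
      (Nat.mul_le_mul_right _ hAk)
    intro x _
    refine (Finset.card_biUnion_le_card_mul _ _ (s * (k * (k * s))) ?_).trans
      (Nat.mul_le_mul_right _ hAk)
    intro y _
    refine (Finset.card_biUnion_le_card_mul _ _ (k * (k * s)) ?_).trans
      (Nat.mul_le_mul_right _ (hW x y))
    intro z _
    have hz : (insert z A).card ≤ k := (Finset.card_insert_le _ _).trans (by omega)
    refine (Finset.card_biUnion_le_card_mul _ _ (k * s) ?_).trans
      (Nat.mul_le_mul_right _ hz)
    intro a _
    refine (Finset.card_biUnion_le_card_mul _ _ s ?_).trans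
      (Nat.mul_le_mul_right _ hz)
    intro b _
    exact Finset.card_image_le.trans (hW a b)
  · apply Nat.mul_le_mul_right
    rw [Finset.card_powersetCard]
    exact Nat.choose_le_pow _ _

/-- good edges -/
def RtGood (Γ : ℕ → ℕ → Prop) (W : ℕ → ℕ → Finset ℕ) (E : Finset ℕ) : Prop :=
  ∀ a ∈ E, ∀ b ∈ E, a ≠ b → ¬ Γ a b → (W a b ∩ E).Nonempty

/-- `c` is a colour of the pair `x y` -/
def RtCol (Γ : ℕ → ℕ → Prop) (W : ℕ → ℕ → Finset ℕ) (c x y : ℕ) : Prop :=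
  Γ c x ∧ Γ c y ∧ ¬ Γ x y ∧ c ∈ W x y

lemma rt_center (Γ : ℕ → ℕ → Prop) (W : ℕ → ℕ → Finset ℕ) (hs : ∀ a b, Γ a b → Γ b a)
    (hWa : ∀ a b, a ∉ W a b) (hWb : ∀ a b, b ∉ W a b) (E : Finset ℕ) (hE : 5 ≤ E.card)
    (hgood : RtGood Γ W E) (hB : ¬ RtB W E)
    (htri : ∀ a ∈ E, ∀ b ∈ E, ∀ c ∈ E, a ≠ b → a ≠ c → b ≠ c → Γ a b → Γ a c → Γ b c → False) :
    ∃ c ∈ E, ∀ x ∈ E, ∀ y ∈ E, x ≠ c → y ≠ c → x ≠ y → RtCol Γ W c x y := by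
  have get3 : ∀ p q : ℕ, ∃ a ∈ E, ∃ b ∈ E, ∃ c ∈ E, a ≠ b ∧ a ≠ c ∧ b ≠ c ∧ a ≠ p ∧ b ≠ p ∧ c ≠ p ∧
      a ≠ q ∧ b ≠ q ∧ c ≠ q := by
    intro p q
    have h1 := Finset.pred_card_le_card_erase (s := E) (a := p)
    have h2 := Finset.pred_card_le_card_erase (s := E.erase p) (a := q)
    obtain ⟨a, b, c, ha, hb, hc, h⟩ := Finset.two_lt_card_iff.1 (show 2 < ((E.erase p).erase q).card by omega)
    simp only [Finset.mem_erase] at ha hb hc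
    exact ⟨a, ha.2.2, b, hb.2.2, c, hc.2.2, h.1, h.2.1, h.2.2, ha.2.1, hb.2.1, hc.2.1, ha.1, hb.1, hc.1⟩
  have hcol : ∀ a ∈ E, ∀ b ∈ E, a ≠ b → ¬ Γ a b → ∃ c ∈ E, c ∈ W a b := by
    intro a ha b hb hab hG
    obtain ⟨c, hc⟩ := hgood a ha b hb hab hG
    rw [Finset.mem_inter] at hc
    exact ⟨c, hc.2, hc.1⟩
  obtain ⟨a, ha, b, hb, hab, hGab⟩ : ∃ a ∈ E, ∃ b ∈ E, a ≠ b ∧ ¬ Γ a b := by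
    by_contra hcon
    push Not at hcon
    obtain ⟨a, ha, b, hb, c, hc, h1, h2, h3, -⟩ := get3 0 0
    exact htri a ha b hb c hc h1 h2 h3 (hcon a ha b hb h1) (hcon a ha c hc h2) (hcon b hb c hc h3)
  obtain ⟨c, hc, hcab⟩ := hcol a ha b hb hab hGab
  have key : ∀ a ∈ E, ∀ b ∈ E, ∀ x ∈ E, ∀ y ∈ E, ∀ c ∈ E, ∀ z ∈ E, c ∈ W a b → z ∈ W x y → c ≠ z →
      (c = x ∨ c = y) := by
    intro a ha b hb x hx y hy c hc z hz h1 h2 h3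
    by_contra h
    push Not at h
    exact hB ⟨a, ha, b, hb, x, hx, y, hy, c, hc, z, hz, h1, h2, h3, h.1, h.2⟩
  have huniq : ∀ x ∈ E, ∀ y ∈ E, x ≠ y → ¬ Γ x y → ∀ z ∈ E, z ∈ W x y → z = c := by
    intro x hx y hy hxy hG z hz hzxy
    by_contra hzc
    have hall : ∀ u ∈ E, ∀ w ∈ E, u ≠ w → u ≠ c → u ≠ z → w ≠ c → w ≠ z → Γ u w := by
      intro u hu w hw huw h1 h2 h3 h4
      by_contra hG'
      obtain ⟨r, hr, hruw⟩ := hcol u hu w hw huw hG'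
      by_cases hrc : r = c
      · have := key x hx y hy u hu w hw z hz r hr hzxy hruw (by rw [hrc]; exact hzc)
        rcases this with h | h
        · exact h2 h.symm
        · exact h4 h.symm
      · have := key a ha b hb u hu w hw c hc r hr hcab hruw (Ne.symm hrc)
        rcases this with h | h
        · exact h1 h.symm
        · exact h3 h.symm
    obtain ⟨u, hu, w, hw, r, hr, d1, d2, d3, d4, d5, d6, d7, d8, d9⟩ := get3 c z
    exact htri u hu w hw r hr d1 d2 d3 (hall u hu w hw d1 d4 d7 d5 d8) (hall u hu r hr d2 d4 d7 d6 d9)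
      (hall w hw r hr d3 d5 d8 d6 d9)
  have hN : ∀ x ∈ E, ∀ y ∈ E, x ≠ y → ¬ Γ x y → c ∈ W x y := by
    intro x hx y hy hxy hG
    obtain ⟨z, hz, hzxy⟩ := hcol x hx y hy hxy hG
    rw [← huniq x hx y hy hxy hG z hz hzxy]
    exact hzxy
  have hstar : ∀ x ∈ E, x ≠ c → Γ c x := by
    intro x hx hxc
    by_contra hG
    exact hWa c x (hN c hc x hx (Ne.symm hxc) hG)
  refine ⟨c, hc, ?_⟩
  intro x hx y hy hxc hyc hxy
  have hG : ¬ Γ x y := fun h => htri c hc x hx y hy (Ne.symm hxc) (Ne.symm hyc) hxy (hstar x hx hxc)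
    (hstar y hy hyc) h
  exact ⟨hstar x hx hxc, hstar y hy hyc, hG, hN x hx y hy hxy hG⟩



/-- pairs having colour `c` -/
noncomputable def rtT (W : ℕ → ℕ → Finset ℕ) (V : Finset ℕ) (c : ℕ) : Finset (ℕ × ℕ) :=
  (V ×ˢ V).filter fun q => c ∈ W q.1 q.2

lemma rtT_sum (W : ℕ → ℕ → Finset ℕ) (V : Finset ℕ) (s : ℕ) (hW : ∀ a b, (W a b).card ≤ s) :
    ∑ c ∈ V, (rtT W V c).card ≤ s * V.card ^ 2 := by
  unfold rtT
  simp only [Finset.card_filter]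
  rw [Finset.sum_comm]
  calc ∑ q ∈ V ×ˢ V, ∑ c ∈ V, (if c ∈ W q.1 q.2 then 1 else 0)
      ≤ ∑ q ∈ V ×ˢ V, s := by
        apply Finset.sum_le_sum
        intro q _
        rw [← Finset.card_filter]
        refine (Finset.card_le_card ?_).trans (hW q.1 q.2)
        intro c hc
        exact (Finset.mem_filter.1 hc).2
    _ = s * V.card ^ 2 := by
        rw [Finset.sum_const, Finset.card_product, smul_eq_mul]; ring

/-- edges with a light centre -/
def RtLight (W : ℕ → ℕ → Finset ℕ) (V : Finset ℕ) (γ : ℝ) (E : Finset ℕ) : Prop :=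
  ∃ c ∈ E, ((rtT W V c).card : ℝ) < γ * (V.card : ℝ) ^ 2 ∧
    ∀ x ∈ E, ∀ y ∈ E, x ≠ c → y ≠ c → x ≠ y → c ∈ W x y

lemma rt_light (W : ℕ → ℕ → Finset ℕ) (V : Finset ℕ) (k s : ℕ) (hk : 5 ≤ k)
    (hW : ∀ a b, (W a b).card ≤ s) (γ : ℝ) (hγ : 0 ≤ γ) :
    (((V.powersetCard k).filter (RtLight W V γ)).card : ℝ) ≤
      γ * s * (V.card : ℝ) ^ (k - 1) := by
  let L := V.filter fun c => ((rtT W V c).card : ℝ) < γ * (V.card : ℝ) ^ 2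
  let 𝓑 : Finset (Finset ℕ) := (L.biUnion fun c => (rtT W V c ×ˢ rtT W V c).image
    fun q => ({c, q.1.1, q.1.2, q.2.1, q.2.2} : Finset ℕ)).filter fun B => B.card = 5
  have h1 : ((V.powersetCard k).filter (RtLight W V γ)) ⊆
      (V.powersetCard k).filter fun E => ∃ B ∈ 𝓑, B ⊆ E := by
    intro E hE
    rw [Finset.mem_filter] at hE ⊢
    refine ⟨hE.1, ?_⟩
    obtain ⟨hEk, c, hc, hlt, hall⟩ := hE
    rw [Finset.mem_powersetCard] at hEk
    have he := Finset.card_erase_of_mem hc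
    obtain ⟨A, hA, hA4⟩ := Finset.exists_subset_card_eq (s := E.erase c) (n := 4) (by omega)
    obtain ⟨x, hx⟩ := Finset.card_pos.1 (show 0 < A.card by omega)
    have a1 := Finset.card_erase_of_mem hx
    obtain ⟨y, z, w, hy, hz, hw, hyz, hyw, hzw⟩ := Finset.two_lt_card_iff.1 (show 2 < (A.erase x).card by omega)
    have hmem : ∀ r ∈ A, r ∈ E ∧ r ≠ c ∧ r ∈ V := by
      intro r hr
      have := hA hr
      rw [Finset.mem_erase] at this
      exact ⟨this.2, this.1, hEk.1 this.2⟩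
    obtain ⟨hx1, hx2, hx3⟩ := hmem x hx
    obtain ⟨hyx, hyA⟩ := Finset.mem_erase.1 hy
    obtain ⟨hzx, hzA⟩ := Finset.mem_erase.1 hz
    obtain ⟨hwx, hwA⟩ := Finset.mem_erase.1 hw
    obtain ⟨hy1, hy2, hy3⟩ := hmem y hyA
    obtain ⟨hz1, hz2, hz3⟩ := hmem z hzA
    obtain ⟨hw1, hw2, hw3⟩ := hmem w hwA
    refine ⟨{c, x, y, z, w}, ?_, ?_⟩
    · simp only [𝓑, Finset.mem_filter, Finset.mem_biUnion, Finset.mem_image]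
      refine ⟨⟨c, ?_, ((x, y), (z, w)), ?_, rfl⟩, ?_⟩
      · simp only [L, Finset.mem_filter]
        exact ⟨hEk.1 hc, hlt⟩
      · simp only [rtT, Finset.mem_product, Finset.mem_filter]
        exact ⟨⟨⟨hx3, hy3⟩, hall x hx1 y hy1 hx2 hy2 (Ne.symm hyx)⟩,
          ⟨⟨hz3, hw3⟩, hall z hz1 w hw1 hz2 hw2 hzw⟩⟩
      · rw [Finset.card_insert_of_notMem, Finset.card_insert_of_notMem, Finset.card_insert_of_notMem,
          Finset.card_insert_of_notMem, Finset.card_singleton]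
        · simpa using hzw
        · simp [hyz, hyw]
        · simp [hyx.symm, hzx.symm, hwx.symm]
        · simp [hx2.symm, hy2.symm, hz2.symm, hw2.symm]
    · intro r hr
      simp only [Finset.mem_insert, Finset.mem_singleton] at hr
      rcases hr with rfl | rfl | rfl | rfl | rfl <;> assumption
  have h2 := (Finset.card_le_card h1).trans (rt_cnt V 𝓑 k 5 (by
    intro B hB
    exact (Finset.mem_filter.1 hB).2))
  have h3 : (𝓑.card : ℝ) ≤ γ * s * (V.card : ℝ) ^ 4 := by
    have h4 : 𝓑.card ≤ ∑ c ∈ L, (rtT W V c).card * (rtT W V c).card := by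
      refine (Finset.card_filter_le _ _).trans ?_
      refine Finset.card_biUnion_le.trans ?_
      apply Finset.sum_le_sum
      intro c _
      refine Finset.card_image_le.trans ?_
      rw [Finset.card_product]
    have h5 : (𝓑.card : ℝ) ≤ ∑ c ∈ L, ((rtT W V c).card : ℝ) * (rtT W V c).card := by
      exact_mod_cast h4
    have h6 : ∑ c ∈ L, ((rtT W V c).card : ℝ) * (rtT W V c).card ≤
        ∑ c ∈ L, γ * (V.card : ℝ) ^ 2 * (rtT W V c).card := by
      apply Finset.sum_le_sum
      intro c hc
      exact mul_le_mul_of_nonneg_right (Finset.mem_filter.1 hc).2.le (by positivity)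
    rw [← Finset.mul_sum] at h6
    have h7 : ∑ c ∈ L, ((rtT W V c).card : ℝ) ≤ s * (V.card : ℝ) ^ 2 := by
      have h8 : ∑ c ∈ L, (rtT W V c).card ≤ s * V.card ^ 2 :=
        (Finset.sum_le_sum_of_subset (Finset.filter_subset _ _)).trans (rtT_sum W V s hW)
      exact_mod_cast h8
    calc (𝓑.card : ℝ) ≤ γ * (V.card : ℝ) ^ 2 * ∑ c ∈ L, ((rtT W V c).card : ℝ) := h5.trans h6
      _ ≤ γ * (V.card : ℝ) ^ 2 * (s * (V.card : ℝ) ^ 2) :=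
          mul_le_mul_of_nonneg_left h7 (by positivity)
      _ = _ := by ring
  calc _ ≤ ((𝓑.card * V.card ^ (k - 5) : ℕ) : ℝ) := by exact_mod_cast h2
    _ = (𝓑.card : ℝ) * (V.card : ℝ) ^ (k - 5) := by push_cast; rfl
    _ ≤ γ * s * (V.card : ℝ) ^ 4 * (V.card : ℝ) ^ (k - 5) :=
        mul_le_mul_of_nonneg_right h3 (by positivity)
    _ = _ := by
        rw [mul_assoc, ← pow_add]
        congr 2
        omega

/-- heavy colours -/
noncomputable def rtH (W : ℕ → ℕ → Finset ℕ) (V : Finset ℕ) (γ : ℝ) : Finset ℕ :=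
  V.filter fun c => γ * (V.card : ℝ) ^ 2 ≤ ((rtT W V c).card : ℝ)

lemma rtH_card (W : ℕ → ℕ → Finset ℕ) (V : Finset ℕ) (s : ℕ)
    (hW : ∀ a b, (W a b).card ≤ s) (γ : ℝ) (hγ : 0 < γ) (hV : 0 < V.card) :
    ((rtH W V γ).card : ℝ) ≤ s / γ := by
  have h1 : ∑ c ∈ rtH W V γ, γ * (V.card : ℝ) ^ 2 ≤ ∑ c ∈ rtH W V γ, ((rtT W V c).card : ℝ) := by
    apply Finset.sum_le_sum
    intro c hc
    exact (Finset.mem_filter.1 hc).2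
  have h7 : ∑ c ∈ rtH W V γ, ((rtT W V c).card : ℝ) ≤ s * (V.card : ℝ) ^ 2 := by
    have h8 : ∑ c ∈ rtH W V γ, (rtT W V c).card ≤ s * V.card ^ 2 :=
      (Finset.sum_le_sum_of_subset (Finset.filter_subset _ _)).trans (rtT_sum W V s hW)
    exact_mod_cast h8
  rw [Finset.sum_const, nsmul_eq_mul] at h1
  have hV' : (0 : ℝ) < (V.card : ℝ) ^ 2 := by positivity
  rw [le_div_iff₀ hγ]
  have := h1.trans h7
  have h9 : ((rtH W V γ).card : ℝ) * γ * (V.card : ℝ) ^ 2 ≤ s * (V.card : ℝ) ^ 2 := by linarith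
  exact le_of_mul_le_mul_right h9 hV'

/-- `c` is a colour of the (unordered) pair `q` -/
def RtColq (Γ : ℕ → ℕ → Prop) (W : ℕ → ℕ → Finset ℕ) (c : ℕ) (q : Finset ℕ) : Prop :=
  ∀ x ∈ q, ∀ y ∈ q, x ≠ y → RtCol Γ W c x y

lemma rt_heavy_dc (Γ : ℕ → ℕ → Prop) (W : ℕ → ℕ → Finset ℕ) (V H : Finset ℕ) (hHV : H ⊆ V)
    (k : ℕ) (hk : 5 ≤ k)
    (𝓔 : Finset (Finset ℕ)) (h𝓔 : ∀ E ∈ 𝓔, E ∈ V.powersetCard k ∧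
      ∃ c ∈ E, c ∈ H ∧ ∀ x ∈ E, ∀ y ∈ E, x ≠ c → y ≠ c → x ≠ y → RtCol Γ W c x y) :
    𝓔.card * (k - 1).choose 2 ≤
      ∑ q ∈ V.powersetCard 2, (H.filter fun c => RtColq Γ W c q).card * (V.card - 2).choose (k - 3) := by
  have hch : ∀ E, ∃ c, E ∈ 𝓔 → c ∈ E ∧ c ∈ H ∧
      ∀ x ∈ E, ∀ y ∈ E, x ≠ c → y ≠ c → x ≠ y → RtCol Γ W c x y := by
    intro E
    by_cases hE : E ∈ 𝓔
    · obtain ⟨c, hc, h⟩ := (h𝓔 E hE).2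
      exact ⟨c, fun _ => ⟨hc, h⟩⟩
    · exact ⟨0, fun h => absurd h hE⟩
  choose cE hcE using hch
  have h1 : 𝓔.card * (k - 1).choose 2 =
      ∑ E ∈ 𝓔, ∑ q ∈ V.powersetCard 2, (if q ⊆ E.erase (cE E) then 1 else 0) := by
    rw [← smul_eq_mul, ← Finset.sum_const]
    apply Finset.sum_congr rfl
    intro E hE
    have hEV := Finset.mem_powersetCard.1 (h𝓔 E hE).1
    rw [← Finset.card_filter]
    have : (V.powersetCard 2).filter (fun q => q ⊆ E.erase (cE E)) = (E.erase (cE E)).powersetCard 2 := by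
      ext q
      simp only [Finset.mem_filter, Finset.mem_powersetCard]
      constructor
      · rintro ⟨⟨_, h⟩, h'⟩; exact ⟨h', h⟩
      · rintro ⟨h, h'⟩
        exact ⟨⟨h.trans ((Finset.erase_subset _ _).trans hEV.1), h'⟩, h⟩
    rw [this, Finset.card_powersetCard, Finset.card_erase_of_mem (hcE E hE).1, hEV.2]
  rw [h1, Finset.sum_comm]
  apply Finset.sum_le_sum
  intro q hq
  rw [Finset.mem_powersetCard] at hq
  rw [← Finset.card_filter]
  have h2 : (𝓔.filter fun E => q ⊆ E.erase (cE E)) ⊆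
      (H.filter fun c => RtColq Γ W c q).biUnion fun c => if c ∈ q then ∅ else
        (V.powersetCard k).filter fun E => insert c q ⊆ E := by
    intro E hE
    rw [Finset.mem_filter] at hE
    obtain ⟨hE, hqE⟩ := hE
    obtain ⟨c1, c2, c3⟩ := hcE E hE
    have hq' : ∀ x ∈ q, x ∈ E ∧ x ≠ cE E := by
      intro x hx
      have := Finset.mem_erase.1 (hqE hx)
      exact ⟨this.2, this.1⟩
    rw [Finset.mem_biUnion]
    refine ⟨cE E, ?_, ?_⟩
    · rw [Finset.mem_filter]
      refine ⟨c2, ?_⟩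
      intro x hx y hy hxy
      exact c3 x (hq' x hx).1 y (hq' y hy).1 (hq' x hx).2 (hq' y hy).2 hxy
    · rw [if_neg (fun h => (hq' _ h).2 rfl), Finset.mem_filter]
      refine ⟨(h𝓔 E hE).1, ?_⟩
      intro x hx
      rcases Finset.mem_insert.1 hx with rfl | h
      · exact c1
      · exact (hq' x h).1
  refine (Finset.card_le_card h2).trans ?_
  apply Finset.card_biUnion_le_card_mul
  intro c hc
  split_ifs with hcq
  · simp
  · have hcV := hHV (Finset.mem_filter.1 hc).1
    refine (rt_cnt_one V (insert c q) k 3 ?_).trans ?_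
    · rw [Finset.card_insert_of_notMem hcq, hq.2]
    · apply Nat.choose_le_choose
      rw [Finset.card_sdiff_of_subset (Finset.insert_subset hcV hq.1), Finset.card_insert_of_notMem hcq, hq.2]
      omega

/-- no closing pair -/
def RtP2 (ℓ : ℕ) (Γ : ℕ → ℕ → Prop) (W : ℕ → ℕ → Finset ℕ) : Prop :=
  ∀ (v : ℕ → ℕ) (u : ℕ), (∀ i < ℓ, ∀ j < ℓ, v i = v j → i = j) → (∀ i < ℓ, v i ≠ u) →
    (∀ i, i + 1 < ℓ → Γ (v i) (v (i + 1))) → ¬ Γ (v (ℓ - 1)) (v 0) → u ∈ W (v (ℓ - 1)) (v 0) → False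

lemma rt_MS (ℓ : ℕ) (hℓ : 3 ≤ ℓ) (Γ : ℕ → ℕ → Prop) (W : ℕ → ℕ → Finset ℕ)
    (hs : ∀ a b, Γ a b → Γ b a) (hirr : ∀ a, ¬ Γ a a)
    (hP1 : ¬ RtCyc ℓ Γ) (hP2 : RtP2 ℓ Γ W) (V S : Finset ℕ) (hS : S.card = (ℓ - 1) / 2 + 1) :
    ((V.powersetCard 2).filter fun q => ∀ c ∈ S, RtColq Γ W c q).card ≤ 2 ^ ((ℓ - 1) / 2) := by
  set t := (ℓ - 1) / 2 with ht
  set M := (V.powersetCard 2).filter fun q => ∀ c ∈ S, RtColq Γ W c q with hM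
  set X := M.biUnion id with hX
  have hMX : M ⊆ X.powerset := by
    intro q hq
    rw [Finset.mem_powerset]
    intro x hx
    exact Finset.mem_biUnion.2 ⟨q, hq, hx⟩
  have hMc := Finset.card_le_card hMX
  rw [Finset.card_powerset] at hMc
  refine hMc.trans (Nat.pow_le_pow_right (by norm_num) ?_)
  by_contra hlt
  push Not at hlt
  have hXS : ∀ x ∈ X, ∀ c ∈ S, Γ x c := by
    intro x hx c hc
    obtain ⟨q, hq, hxq⟩ := Finset.mem_biUnion.1 hx
    simp only [id] at hxq
    obtain ⟨hq1, hq2⟩ := Finset.mem_filter.1 hq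
    have hqc := (Finset.mem_powersetCard.1 hq1).2
    obtain ⟨y, hy⟩ := Finset.card_pos.1 (show 0 < (q.erase x).card by
      rw [Finset.card_erase_of_mem hxq]; omega)
    rw [Finset.mem_erase] at hy
    exact hs _ _ (hq2 c hc x hxq y hy.2 (Ne.symm hy.1)).1
  by_cases hpar : ℓ = 2 * (t + 1)
  · apply hP1
    rw [hpar]
    exact rt_evencycle Γ hs hirr X S (t + 1) (by omega) hlt (by omega) hXS
  · have hpar' : ℓ = 2 * t + 1 := by omega
    obtain ⟨x0, hx0⟩ := Finset.card_pos.1 (show 0 < X.card by omega)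
    obtain ⟨q, hq, hxq⟩ := Finset.mem_biUnion.1 hx0
    simp only [id] at hxq
    obtain ⟨hq1, hq2⟩ := Finset.mem_filter.1 hq
    have hqc := (Finset.mem_powersetCard.1 hq1).2
    obtain ⟨y0, hy⟩ := Finset.card_pos.1 (show 0 < (q.erase x0).card by
      rw [Finset.card_erase_of_mem hxq]; omega)
    rw [Finset.mem_erase] at hy
    obtain ⟨x, hx1, hx2, hx3, hx4⟩ := rt_seq_two X (t + 1) (by omega) hlt x0 y0 hx0
      (Finset.mem_biUnion.2 ⟨q, hq, hy.2⟩) (Ne.symm hy.1)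
    obtain ⟨c, hc1, hc2⟩ := rt_seq S (t + 1) (by omega)
    have hadj : ∀ i < t + 1, ∀ j < t + 1, Γ (x i) (c j) := fun i hi j hj =>
      hXS _ (hx1 i hi) _ (hc1 j hj)
    have hne : ∀ i < t + 1, ∀ j < t + 1, x i ≠ c j := by
      intro i hi j hj h
      have := hadj i hi j hj
      rw [h] at this
      exact hirr _ this
    have e0 : rtAlt x c 0 = x0 := by simp [rtAlt, hx3]
    have e1 : rtAlt x c (ℓ - 1) = y0 := by
      unfold rtAlt
      rw [if_pos (by omega), ← hx4]
      congr 1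
    have hcol := hq2 (c t) (hc1 t (by omega)) y0 hy.2 x0 hxq hy.1
    refine hP2 (rtAlt x c) (c t) ?_ ?_ ?_ ?_ ?_
    · intro i hi j hj h
      exact rtAlt_inj x c (t + 1) hx2 hc2 hne i (by omega) j (by omega) h
    · intro i hi h
      unfold rtAlt at h
      split_ifs at h with h'
      · exact hne _ (by omega) _ (by omega) h
      · have := hc2 _ (by omega) _ (by omega) h
        omega
    · intro i hi
      exact rtAlt_adj Γ hs x c (t + 1) hadj i (by omega)
    · rw [e0, e1]; exact hcol.2.2.1
    · rw [e0, e1]; exact hcol.2.2.2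



/-- edges with a heavy centre -/
def RtHv (Γ : ℕ → ℕ → Prop) (W : ℕ → ℕ → Finset ℕ) (H E : Finset ℕ) : Prop :=
  ∃ c ∈ E, c ∈ H ∧ ∀ x ∈ E, ∀ y ∈ E, x ≠ c → y ≠ c → x ≠ y → RtCol Γ W c x y

lemma rt_heavy (ℓ : ℕ) (hℓ : 3 ≤ ℓ) (Γ : ℕ → ℕ → Prop) (W : ℕ → ℕ → Finset ℕ)
    (hs : ∀ a b, Γ a b → Γ b a) (hirr : ∀ a, ¬ Γ a a)
    (hP1 : ¬ RtCyc ℓ Γ) (hP2 : RtP2 ℓ Γ W) (V H : Finset ℕ) (hHV : H ⊆ V)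
    (k h : ℕ) (hk : 5 ≤ k) (hH : H.card ≤ h) (hVk : k ≤ V.card)
    (𝓔 : Finset (Finset ℕ)) (h𝓔 : ∀ E ∈ 𝓔, E ∈ V.powersetCard k ∧
      ∃ c ∈ E, c ∈ H ∧ ∀ x ∈ E, ∀ y ∈ E, x ≠ c → y ≠ c → x ≠ y → RtCol Γ W c x y) :
    𝓔.card ≤ (ℓ - 1) / 2 * V.card.choose (k - 1) +
      h * (2 ^ h * 2 ^ ((ℓ - 1) / 2)) * V.card ^ (k - 3) := by
  have hdc := rt_heavy_dc Γ W V H hHV k hk 𝓔 h𝓔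
  set t := (ℓ - 1) / 2 with ht
  set c' := (V.card - 2).choose (k - 3) with hc'
  set M := (V.powersetCard 2).filter fun q => t + 1 ≤ (H.filter fun c => RtColq Γ W c q).card with hM
  have hMc : M.card ≤ 2 ^ h * 2 ^ t := by
    have h1 : M ⊆ (H.powersetCard (t + 1)).biUnion fun S =>
        (V.powersetCard 2).filter fun q => ∀ c ∈ S, RtColq Γ W c q := by
      intro q hq
      obtain ⟨hq1, hq2⟩ := Finset.mem_filter.1 hq
      obtain ⟨S, hS, hSc⟩ := Finset.exists_subset_card_eq hq2
      rw [Finset.mem_biUnion]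
      refine ⟨S, ?_, ?_⟩
      · rw [Finset.mem_powersetCard]
        exact ⟨hS.trans (Finset.filter_subset _ _), hSc⟩
      · rw [Finset.mem_filter]
        exact ⟨hq1, fun c hc => (Finset.mem_filter.1 (hS hc)).2⟩
    refine (Finset.card_le_card h1).trans ?_
    refine (Finset.card_biUnion_le_card_mul _ _ (2 ^ t) ?_).trans ?_
    · intro S hS
      exact rt_MS ℓ hℓ Γ W hs hirr hP1 hP2 V S (Finset.mem_powersetCard.1 hS).2
    · apply Nat.mul_le_mul_right
      refine (Finset.card_le_card (show H.powersetCard (t + 1) ⊆ H.powerset from fun S hS =>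
        Finset.mem_powerset.2 (Finset.mem_powersetCard.1 hS).1)).trans ?_
      rw [Finset.card_powerset]
      exact Nat.pow_le_pow_right (by norm_num) hH
  have hsum : ∑ q ∈ V.powersetCard 2, (H.filter fun c => RtColq Γ W c q).card * c' ≤
      ∑ q ∈ V.powersetCard 2, (t * c' + (if t + 1 ≤ (H.filter fun c => RtColq Γ W c q).card then h * c' else 0)) := by
    apply Finset.sum_le_sum
    intro q _
    split_ifs with h1
    · have : (H.filter fun c => RtColq Γ W c q).card ≤ h := (Finset.card_filter_le _ _).trans hH
      have := Nat.mul_le_mul_right c' this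
      omega
    · have : (H.filter fun c => RtColq Γ W c q).card ≤ t := by omega
      exact Nat.mul_le_mul_right c' this
  rw [Finset.sum_add_distrib, Finset.sum_const, Finset.card_powersetCard, ← Finset.sum_filter,
    Finset.sum_const, smul_eq_mul, smul_eq_mul] at hsum
  have hcm : V.card.choose (k - 1) * (k - 1).choose 2 = V.card.choose 2 * c' := by
    rw [Nat.choose_mul (by omega), hc', show k - 1 - 2 = k - 3 by omega]
  have hc2 : 1 ≤ (k - 1).choose 2 := Nat.choose_pos (by omega)
  have hcc : c' ≤ V.card ^ (k - 3) :=
    (Nat.choose_le_pow _ _).trans (Nat.pow_le_pow_left (by omega) _)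
  have h3 : M.card * (h * c') ≤ h * (2 ^ h * 2 ^ t) * V.card ^ (k - 3) := by
    calc M.card * (h * c') ≤ (2 ^ h * 2 ^ t) * (h * V.card ^ (k - 3)) :=
          Nat.mul_le_mul hMc (Nat.mul_le_mul_left _ hcc)
      _ = _ := by ring
  have h4 : V.card.choose 2 * (t * c') = t * V.card.choose (k - 1) * (k - 1).choose 2 := by
    rw [mul_assoc, hcm]; ring
  have h5 := hdc.trans hsum
  rw [h4] at h5
  have h6 : h * (2 ^ h * 2 ^ t) * V.card ^ (k - 3) ≤
    h * (2 ^ h * 2 ^ t) * V.card ^ (k - 3) * (k - 1).choose 2 := Nat.le_mul_of_pos_right _ hc2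
  refine Nat.le_of_mul_le_mul_right (c := (k - 1).choose 2) ?_ hc2
  rw [add_mul]
  exact h5.trans (Nat.add_le_add_left (h3.trans h6) _)

lemma rt_choose_ge (r n : ℕ) (hn : 2 * r ≤ n) :
    (n : ℝ) ^ r ≤ (2 ^ r * (r.factorial : ℝ)) * (n.choose r : ℝ) := by
  have h := Nat.pow_le_choose (α := ℝ) r n
  have h1 : (n : ℝ) / 2 ≤ ((n + 1 - r : ℕ) : ℝ) := by
    have : n ≤ 2 * (n + 1 - r) := by omega
    have : (n : ℝ) ≤ 2 * ((n + 1 - r : ℕ) : ℝ) := by exact_mod_cast this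
    linarith
  have h2 := pow_le_pow_left₀ (by positivity) h1 r
  have hf : (0 : ℝ) < r.factorial := by exact_mod_cast r.factorial_pos
  rw [div_le_iff₀ hf] at h
  rw [div_pow, div_le_iff₀ (by positivity)] at h2
  calc (n : ℝ) ^ r ≤ ((n + 1 - r : ℕ) : ℝ) ^ r * 2 ^ r := h2
    _ ≤ ((n.choose r : ℝ) * r.factorial) * 2 ^ r := by
        apply mul_le_mul_of_nonneg_right _ (by positivity)
        exact_mod_cast h
    _ = _ := by ring

theorem rt_det (k ℓ s : ℕ) (hk : 5 ≤ k) (hℓ : 3 ≤ ℓ) (hs1 : 1 ≤ s) (ε : ℝ) (hε : 0 < ε) :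
    ∃ n0 : ℕ, ∀ n, n0 ≤ n → ∀ (Γ : ℕ → ℕ → Prop) (W : ℕ → ℕ → Finset ℕ),
      (∀ a b, Γ a b → Γ b a) → (∀ a, ¬ Γ a a) → (∀ a b, (W a b).card ≤ s) →
      (∀ a b, a ∉ W a b) → (∀ a b, b ∉ W a b) → ¬ RtCyc ℓ Γ → RtP2 ℓ Γ W →
      ((((vtx n).powersetCard k).filter (RtGood Γ W)).card : ℝ) ≤
        (((ℓ - 1) / 2 : ℕ) + ε : ℝ) * (n.choose (k - 1) : ℝ) := by
  obtain ⟨K, hK⟩ : ∃ K : ℝ, K = 2 ^ (k - 1) * ((k - 1).factorial : ℝ) := ⟨_, rfl⟩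
  have hK0 : 0 < K := by
    have : (0 : ℝ) < (k - 1).factorial := by exact_mod_cast (k - 1).factorial_pos
    rw [hK]
    positivity
  have hs0 : (0 : ℝ) < s := by exact_mod_cast hs1
  obtain ⟨γ, hγ⟩ : ∃ r : ℝ, r = ε / (4 * K * s) := ⟨_, rfl⟩
  have hγ0 : 0 < γ := by rw [hγ]; positivity
  obtain ⟨n1, hn1⟩ := rt_tri ℓ hℓ (ε / (4 * K)) (by positivity)
  obtain ⟨h, hh⟩ : ∃ r : ℕ, r = ⌊(s : ℝ) / γ⌋₊ := ⟨_, rfl⟩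
  obtain ⟨c1, hc1⟩ : ∃ r : ℝ, r = ((k * (k * (s * (k * (k * s)))) : ℕ) : ℝ) := ⟨_, rfl⟩
  obtain ⟨c2, hc2⟩ : ∃ r : ℝ, r = ((h * (2 ^ h * 2 ^ ((ℓ - 1) / 2)) : ℕ) : ℝ) := ⟨_, rfl⟩
  obtain ⟨n2, hn2⟩ : ∃ r : ℕ, r = ⌈(c1 + c2) / (ε / (4 * K))⌉₊ := ⟨_, rfl⟩
  refine ⟨n1 + n2 + 2 * k, ?_⟩
  intro n hn Γ W hs hirr hW hWa hWb hP1 hP2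
  have hVc : (vtx n).card = n := by simp [vtx]
  set V := vtx n with hV
  have hn0 : (0 : ℝ) < n := by
    have : 0 < n := by omega
    exact_mod_cast this
  have htri := hn1 V (by omega) Γ hs hirr hP1
  have hchoose := rt_choose_ge (k - 1) n (by omega)
  rw [← hK] at hchoose
  -- the pieces
  set 𝓐 := (V.powersetCard k).filter fun E => ∃ B ∈ rtTri Γ V, B ⊆ E with h𝓐
  set 𝓑 := (V.powersetCard k).filter (RtB W) with h𝓑
  set 𝓛 := (V.powersetCard k).filter (RtLight W V γ) with h𝓛
  set H := rtH W V γ with hH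
  set 𝓗 := (V.powersetCard k).filter (RtHv Γ W H) with h𝓗
  have hsub : (V.powersetCard k).filter (RtGood Γ W) ⊆ 𝓐 ∪ (𝓑 ∪ (𝓛 ∪ 𝓗)) := by
    intro E hE
    obtain ⟨hEk, hgood⟩ := Finset.mem_filter.1 hE
    have hEk' := Finset.mem_powersetCard.1 hEk
    by_cases hA : ∃ B ∈ rtTri Γ V, B ⊆ E
    · exact Finset.mem_union_left _ (Finset.mem_filter.2 ⟨hEk, hA⟩)
    apply Finset.mem_union_right
    by_cases hB : RtB W E
    · exact Finset.mem_union_left _ (Finset.mem_filter.2 ⟨hEk, hB⟩)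
    apply Finset.mem_union_right
    obtain ⟨c, hc, hall⟩ := rt_center Γ W hs hWa hWb E (by omega) hgood hB (by
      intro a ha b hb c hc hab hac hbc g1 g2 g3
      apply hA
      refine ⟨{a, b, c}, ?_, ?_⟩
      · unfold rtTri
        rw [Finset.mem_filter, Finset.mem_powersetCard]
        refine ⟨⟨?_, Finset.card_eq_three.2 ⟨a, b, c, hab, hac, hbc, rfl⟩⟩, ?_⟩
        · intro r hr
          simp only [Finset.mem_insert, Finset.mem_singleton] at hr
          rcases hr with rfl | rfl | rfl
          · exact hEk'.1 ha
          · exact hEk'.1 hb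
          · exact hEk'.1 hc
        · intro r hr r' hr' hne
          simp only [Finset.mem_insert, Finset.mem_singleton] at hr hr'
          rcases hr with rfl | rfl | rfl <;> rcases hr' with rfl | rfl | rfl <;>
            first
            | exact absurd rfl hne
            | assumption
            | (apply hs; assumption)
      · intro r hr
        simp only [Finset.mem_insert, Finset.mem_singleton] at hr
        rcases hr with rfl | rfl | rfl <;> assumption)
    by_cases hL : ((rtT W V c).card : ℝ) < γ * (V.card : ℝ) ^ 2
    · apply Finset.mem_union_left
      refine Finset.mem_filter.2 ⟨hEk, c, hc, hL, ?_⟩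
      intro x hx y hy h1 h2 h3
      exact (hall x hx y hy h1 h2 h3).2.2.2
    · apply Finset.mem_union_right
      rw [h𝓗, Finset.mem_filter]
      refine ⟨hEk, c, hc, ?_, hall⟩
      rw [hH, rtH, Finset.mem_filter]
      exact ⟨hEk'.1 hc, not_lt.1 hL⟩
  have hAc : (𝓐.card : ℝ) ≤ ε / 4 * (n.choose (k - 1) : ℝ) := by
    have h1 := rt_cnt V (rtTri Γ V) k 3 (by
      intro B hB
      exact (Finset.mem_powersetCard.1 (Finset.mem_filter.1 hB).1).2)
    have h1' : (𝓐.card : ℝ) ≤ ((rtTri Γ V).card : ℝ) * (V.card : ℝ) ^ (k - 3) := by exact_mod_cast h1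
    rw [hVc] at h1' htri
    calc (𝓐.card : ℝ) ≤ (ε / (4 * K) * (n : ℝ) ^ 2) * (n : ℝ) ^ (k - 3) :=
          h1'.trans (mul_le_mul_of_nonneg_right htri (by positivity))
      _ = ε / (4 * K) * (n : ℝ) ^ (k - 1) := by
          rw [mul_assoc, ← pow_add]
          congr 2
          omega
      _ ≤ ε / (4 * K) * (K * (n.choose (k - 1) : ℝ)) := mul_le_mul_of_nonneg_left hchoose (by positivity)
      _ = _ := by field_simp
  have hLc : (𝓛.card : ℝ) ≤ ε / 4 * (n.choose (k - 1) : ℝ) := by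
    have h1 := rt_light W V k s hk hW γ hγ0.le
    rw [hVc] at h1
    calc (𝓛.card : ℝ) ≤ γ * s * (n : ℝ) ^ (k - 1) := h1
      _ ≤ γ * s * (K * (n.choose (k - 1) : ℝ)) := mul_le_mul_of_nonneg_left hchoose (by positivity)
      _ = _ := by rw [hγ]; field_simp
  have hBc : (𝓑.card : ℝ) ≤ c1 * (n : ℝ) ^ (k - 2) := by
    have h1 := rt_cntB V k s hk W hW hWa hWb
    rw [hVc] at h1
    have h2 : (𝓑.card : ℝ) ≤ ((n ^ (k - 2) * (k * (k * (s * (k * (k * s))))) : ℕ) : ℝ) := by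
      exact_mod_cast h1
    rw [Nat.cast_mul, ← hc1] at h2
    push_cast at h2
    linarith
  have hHc : (𝓗.card : ℝ) ≤ (((ℓ - 1) / 2 : ℕ) : ℝ) * (n.choose (k - 1) : ℝ) + c2 * (n : ℝ) ^ (k - 3) := by
    have h1 := rt_heavy ℓ hℓ Γ W hs hirr hP1 hP2 V H (Finset.filter_subset _ _) k h hk
      (hh ▸ Nat.le_floor (rtH_card W V s hW γ hγ0 (by omega))) (by omega) 𝓗 (by
        intro E hE
        exact Finset.mem_filter.1 hE)
    rw [hVc] at h1
    have h2 : (𝓗.card : ℝ) ≤ (((ℓ - 1) / 2 * n.choose (k - 1) +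
      (h * (2 ^ h * 2 ^ ((ℓ - 1) / 2))) * n ^ (k - 3) : ℕ) : ℝ) := by exact_mod_cast h1
    rw [Nat.cast_add, Nat.cast_mul, Nat.cast_mul (h * (2 ^ h * 2 ^ ((ℓ - 1) / 2))), ← hc2, Nat.cast_pow] at h2
    exact h2
  have hrest : c1 * (n : ℝ) ^ (k - 2) + c2 * (n : ℝ) ^ (k - 3) ≤ ε / 4 * (n.choose (k - 1) : ℝ) := by
    have hc20 : 0 ≤ c2 := by rw [hc2]; positivity
    have h1n : (1 : ℝ) ≤ n := by
      have : 1 ≤ n := by omega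
      exact_mod_cast this
    have h2 : (n : ℝ) ^ (k - 3) ≤ (n : ℝ) ^ (k - 2) := pow_le_pow_right₀ h1n (by omega)
    have h3 : c1 + c2 ≤ ε / (4 * K) * n := by
      have : (c1 + c2) / (ε / (4 * K)) ≤ n := by
        refine (Nat.le_ceil _).trans ?_
        rw [← hn2]
        have : n2 ≤ n := by omega
        exact_mod_cast this
      rw [div_le_iff₀ (by positivity)] at this
      linarith
    calc c1 * (n : ℝ) ^ (k - 2) + c2 * (n : ℝ) ^ (k - 3) ≤ (c1 + c2) * (n : ℝ) ^ (k - 2) := by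
          have := mul_le_mul_of_nonneg_left h2 hc20
          linarith
      _ ≤ (ε / (4 * K) * n) * (n : ℝ) ^ (k - 2) := mul_le_mul_of_nonneg_right h3 (by positivity)
      _ = ε / (4 * K) * (n : ℝ) ^ (k - 1) := by
          rw [mul_assoc, ← pow_succ']
          congr 2
          omega
      _ ≤ ε / (4 * K) * (K * (n.choose (k - 1) : ℝ)) := mul_le_mul_of_nonneg_left hchoose (by positivity)
      _ = _ := by field_simp
  have hfin : ((V.powersetCard k).filter (RtGood Γ W)).card ≤ 𝓐.card + (𝓑.card + (𝓛.card + 𝓗.card)) := by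
    refine (Finset.card_le_card hsub).trans ?_
    refine (Finset.card_union_le _ _).trans (Nat.add_le_add_left ?_ _)
    refine (Finset.card_union_le _ _).trans (Nat.add_le_add_left ?_ _)
    exact Finset.card_union_le _ _
  have hfin' : (((V.powersetCard k).filter (RtGood Γ W)).card : ℝ) ≤
    (𝓐.card : ℝ) + ((𝓑.card : ℝ) + ((𝓛.card : ℝ) + (𝓗.card : ℝ))) := by exact_mod_cast hfin
  have hC0 : (0 : ℝ) ≤ (n.choose (k - 1) : ℝ) := by positivity
  have : 0 ≤ ε / 4 * (n.choose (k - 1) : ℝ) := by positivity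
  rw [add_mul]
  linarith



/-- degree of a set -/
def rtDeg (F : Finset (Finset ℕ)) (B : Finset ℕ) : ℕ := (F.filter fun E => B ⊆ E).card

def rtG (f : Finset ℕ → Option (Finset ℕ)) (a b : ℕ) : Prop := a ≠ b ∧ f {a, b} = none

def rtW (f : Finset ℕ → Option (Finset ℕ)) (a b : ℕ) : Finset ℕ := (f {a, b}).getD ∅ \ {a, b}

lemma rtG_symm (f : Finset ℕ → Option (Finset ℕ)) (a b : ℕ) (h : rtG f a b) : rtG f b a := by
  refine ⟨h.1.symm, ?_⟩
  rw [Finset.pair_comm]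
  exact h.2

lemma rt_triple_strong (s : ℕ) (F : Finset (Finset ℕ)) (m : ℝ) (hm : 0 < m)
    (h4 : ∀ B : Finset ℕ, B.card = 4 → (s : ℝ) * (rtDeg F B : ℝ) < m) (hs1 : 1 ≤ s)
    (T : Finset ℕ) (hT : T.card = 3) (hTm : m ≤ (rtDeg F T : ℝ)) : RtStrong s F T := by
  intro S hS hST
  by_contra hcon
  push Not at hcon
  have hs0 : (0 : ℝ) < s := by exact_mod_cast hs1
  have h1 : (F.filter fun E => T ⊆ E) ⊆ S.biUnion fun w => F.filter fun E => insert w T ⊆ E := by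
    intro E hE
    obtain ⟨hE1, hE2⟩ := Finset.mem_filter.1 hE
    obtain ⟨w, hw1, hw2⟩ := Finset.not_disjoint_iff.1 (hcon E hE1 hE2)
    rw [Finset.mem_biUnion]
    exact ⟨w, hw2, Finset.mem_filter.2 ⟨hE1, Finset.insert_subset hw1 hE2⟩⟩
  have h2 : rtDeg F T ≤ ∑ w ∈ S, rtDeg F (insert w T) :=
    (Finset.card_le_card h1).trans Finset.card_biUnion_le
  have h3 : (rtDeg F T : ℝ) ≤ ∑ w ∈ S, (rtDeg F (insert w T) : ℝ) := by exact_mod_cast h2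
  rcases S.eq_empty_or_nonempty with rfl | hne
  · simp at h3
    rw [h3] at hTm
    simp at hTm
    linarith
  · have h5 : ∑ w ∈ S, (rtDeg F (insert w T) : ℝ) < ∑ w ∈ S, m / s := by
      apply Finset.sum_lt_sum_of_nonempty hne
      intro w hw
      rw [lt_div_iff₀ hs0, mul_comm]
      apply h4
      rw [Finset.card_insert_of_notMem (Finset.disjoint_left.1 hST hw), hT]
    rw [Finset.sum_const, nsmul_eq_mul] at h5
    have h6 : (S.card : ℝ) ≤ s := by exact_mod_cast hS
    have h7 : (S.card : ℝ) * (m / s) ≤ s * (m / s) := mul_le_mul_of_nonneg_right h6 (by positivity)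
    have h8 : (s : ℝ) * (m / s) = m := by field_simp
    linarith

lemma rt_finger {α : Type} [DecidableEq α] (k ℓ n : ℕ) (hℓ : 3 ≤ ℓ) (C : Finset (Finset α))
    (hC : IsLinearCycle k ℓ C) (F : Finset (Finset ℕ)) (hF : F ⊆ (vtx n).powersetCard k)
    (hfree : HFree C F) (m : ℝ) (hm : 0 < m)
    (h4 : ∀ B : Finset ℕ, B.card = 4 → (((k + 3) * ℓ : ℕ) : ℝ) * (rtDeg F B : ℝ) < m) :
    ∃ f : Finset ℕ → Option (Finset ℕ),
      (∀ q, f q = none ∨ ∃ A, f q = some A ∧ A ⊆ vtx n ∧ A.card ≤ (k + 3) * ℓ) ∧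
      ¬ RtCyc ℓ (rtG f) ∧ RtP2 ℓ (rtG f) (rtW f) ∧
      ((F.filter fun E => ¬ RtGood (rtG f) (rtW f) E).card : ℝ) ≤
        (n : ℝ) ^ 2 * (((k + 3) * ℓ : ℕ) : ℝ) * m := by
  set s := (k + 3) * ℓ with hs
  have hs1 : 1 ≤ s := by
    have : 0 < (k + 3) * ℓ := Nat.mul_pos (by omega) (by omega)
    omega
  have hFk : ∀ E ∈ F, E.card = k := fun E hE => (Finset.mem_powersetCard.1 (hF hE)).2
  have hch : ∀ q, ∃ S : Finset ℕ, ¬ RtStrong s F q → S.card ≤ s ∧ Disjoint S q ∧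
      ∀ E ∈ F, q ⊆ E → ¬ Disjoint E S := by
    intro q
    by_cases h : RtStrong s F q
    · exact ⟨∅, fun h' => absurd h h'⟩
    · have h' := h
      unfold RtStrong at h'
      push Not at h'
      obtain ⟨S, h1, h2, h3⟩ := h'
      exact ⟨S, fun _ => ⟨h1, h2, h3⟩⟩
  choose W0 hW0 using hch
  let f : Finset ℕ → Option (Finset ℕ) := fun q => if RtStrong s F q then none else
    some ((W0 q ∩ vtx n).filter fun w => m ≤ (rtDeg F (insert w q) : ℝ))
  have fpos : ∀ q, RtStrong s F q → f q = none := fun q h => if_pos h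
  have fneg : ∀ q, ¬ RtStrong s F q → f q =
    some ((W0 q ∩ vtx n).filter fun w => m ≤ (rtDeg F (insert w q) : ℝ)) := fun q h => if_neg h
  have hG : ∀ a b, rtG f a b → RtStrong s F {a, b} := by
    intro a b h
    by_contra hcon
    have := h.2
    rw [fneg _ hcon] at this
    exact Option.some_ne_none _ this
  have hWu : ∀ a b u, a ≠ b → u ∈ rtW f a b → RtStrong s F ({a, b} ∪ {u}) := by
    intro a b u hab hu
    unfold rtW at hu
    rw [Finset.mem_sdiff] at hu
    obtain ⟨hu1, hu2⟩ := hu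
    by_cases h : RtStrong s F {a, b}
    · rw [fpos _ h] at hu1
      simp at hu1
    · rw [fneg _ h] at hu1
      simp only [Option.getD_some, Finset.mem_filter] at hu1
      have e : ({a, b} ∪ {u} : Finset ℕ) = insert u {a, b} := by
        rw [Finset.union_comm]; rfl
      rw [e]
      apply rt_triple_strong s F m hm h4 hs1 _ _ hu1.2
      rw [Finset.card_insert_of_notMem hu2, Finset.card_pair hab]
  refine ⟨f, ?_, ?_, ?_, ?_⟩
  · intro q
    by_cases h : RtStrong s F q
    · exact Or.inl (fpos q h)
    · right
      refine ⟨_, fneg q h, ?_, ?_⟩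
      · exact (Finset.filter_subset _ _).trans Finset.inter_subset_right
      · exact (Finset.card_le_card ((Finset.filter_subset _ _).trans Finset.inter_subset_left)).trans
          (hW0 q h).1
  · rintro ⟨v, hv1, hv2, hv3⟩
    refine rt_cycle k ℓ hℓ C hC F hFk v ∅ (by simp) hv1 (by simp) ?_ ?_ hfree
    · intro i hi
      exact hG _ _ (hv2 i hi)
    · rw [Finset.union_empty]
      exact hG _ _ hv3
  · intro v u hv1 hvu hv2 _ hu
    refine rt_cycle k ℓ hℓ C hC F hFk v {u} (by simp) hv1 (by simpa using hvu) ?_ ?_ hfree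
    · intro i hi
      exact hG _ _ (hv2 i hi)
    · apply hWu _ _ _ _ hu
      intro h
      have := hv1 (ℓ - 1) (by omega) 0 (by omega) h
      omega
  · let D : ℕ × ℕ → ℕ → Finset (Finset ℕ) := fun q w =>
      if (rtDeg F (insert w {q.1, q.2}) : ℝ) < m then F.filter fun E => insert w {q.1, q.2} ⊆ E else ∅
    let W1 : ℕ × ℕ → Finset ℕ := fun q => if RtStrong s F {q.1, q.2} then ∅ else W0 {q.1, q.2}
    have h1 : (F.filter fun E => ¬ RtGood (rtG f) (rtW f) E) ⊆
        (vtx n ×ˢ vtx n).biUnion fun q => (W1 q).biUnion fun w => D q w := by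
      intro E hE
      obtain ⟨hEF, hng⟩ := Finset.mem_filter.1 hE
      have hEV := (Finset.mem_powersetCard.1 (hF hEF)).1
      unfold RtGood at hng
      push Not at hng
      obtain ⟨a, ha, b, hb, hab, hGab, hemp⟩ := hng
      have hns : ¬ RtStrong s F {a, b} := fun h => hGab ⟨hab, fpos _ h⟩
      have hsubE : ({a, b} : Finset ℕ) ⊆ E := by
        intro x hx
        simp only [Finset.mem_insert, Finset.mem_singleton] at hx
        rcases hx with rfl | rfl <;> assumption
      obtain ⟨hw1, hw2, hw3⟩ := hW0 _ hns
      obtain ⟨w, hwE, hw⟩ := Finset.not_disjoint_iff.1 (hw3 E hEF hsubE)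
      have hdeg : (rtDeg F (insert w {a, b}) : ℝ) < m := by
        by_contra hge
        push Not at hge
        have : w ∈ rtW f a b ∩ E := by
          rw [Finset.mem_inter]
          refine ⟨?_, hwE⟩
          unfold rtW
          rw [fneg _ hns, Finset.mem_sdiff]
          refine ⟨?_, Finset.disjoint_left.1 hw2 hw⟩
          simp only [Option.getD_some, Finset.mem_filter, Finset.mem_inter]
          exact ⟨⟨hw, hEV hwE⟩, hge⟩
        rw [hemp] at this
        simp at this
      simp only [Finset.mem_biUnion]
      refine ⟨(a, b), Finset.mem_product.2 ⟨hEV ha, hEV hb⟩, w, ?_, ?_⟩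
      · simp only [W1]
        rw [if_neg hns]
        exact hw
      · simp only [D]
        rw [if_pos hdeg]
        exact Finset.mem_filter.2 ⟨hEF, Finset.insert_subset hwE hsubE⟩
    have hD : ∀ q w, ((D q w).card : ℝ) ≤ m := by
      intro q w
      simp only [D]
      split_ifs with h
      · exact h.le
      · simpa using hm.le
    have hW1 : ∀ q, ((W1 q).card : ℝ) ≤ s := by
      intro q
      simp only [W1]
      split_ifs with h
      · simp
      · exact_mod_cast (hW0 _ h).1
    have h2 : (F.filter fun E => ¬ RtGood (rtG f) (rtW f) E).card ≤
        ∑ q ∈ vtx n ×ˢ vtx n, ∑ w ∈ W1 q, (D q w).card :=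
      (Finset.card_le_card h1).trans (Finset.card_biUnion_le.trans
        (Finset.sum_le_sum fun q _ => Finset.card_biUnion_le))
    calc ((F.filter fun E => ¬ RtGood (rtG f) (rtW f) E).card : ℝ)
        ≤ ∑ q ∈ vtx n ×ˢ vtx n, ∑ w ∈ W1 q, ((D q w).card : ℝ) := by exact_mod_cast h2
      _ ≤ ∑ q ∈ vtx n ×ˢ vtx n, (s : ℝ) * m := by
          apply Finset.sum_le_sum
          intro q _
          calc ∑ w ∈ W1 q, ((D q w).card : ℝ) ≤ ∑ w ∈ W1 q, m := Finset.sum_le_sum fun w _ => hD q w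
            _ = (W1 q).card * m := by rw [Finset.sum_const, nsmul_eq_mul]
            _ ≤ s * m := mul_le_mul_of_nonneg_right (hW1 q) hm.le
      _ = (n : ℝ) ^ 2 * s * m := by
          rw [Finset.sum_const, nsmul_eq_mul, Finset.card_product]
          simp [vtx]
          ring



noncomputable def rtRes (V : Finset ℕ) (f : Finset ℕ → Option (Finset ℕ)) (q : Finset ℕ) :
    Option (Finset ℕ) := if q ∈ V.powersetCard 2 then f q else some ∅

lemma rtRes_pair (V : Finset ℕ) (f : Finset ℕ → Option (Finset ℕ)) (a b : ℕ) (ha : a ∈ V) (hb : b ∈ V)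
    (hab : a ≠ b) : rtRes V f {a, b} = f {a, b} := by
  unfold rtRes
  rw [if_pos]
  rw [Finset.mem_powersetCard]
  refine ⟨?_, Finset.card_pair hab⟩
  intro x hx
  simp only [Finset.mem_insert, Finset.mem_singleton] at hx
  rcases hx with rfl | rfl <;> assumption

lemma rtRes_good (V : Finset ℕ) (f : Finset ℕ → Option (Finset ℕ)) (E : Finset ℕ) (hE : E ⊆ V)
    (h : RtGood (rtG f) (rtW f) E) : RtGood (rtG (rtRes V f)) (rtW (rtRes V f)) E := by
  intro a ha b hb hab hG
  have e := rtRes_pair V f a b (hE ha) (hE hb) hab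
  have := h a ha b hb hab (fun h' => hG ⟨hab, by rw [e]; exact h'.2⟩)
  unfold rtW at this ⊢
  rw [e]
  exact this

lemma rtRes_G (V : Finset ℕ) (f : Finset ℕ → Option (Finset ℕ)) (a b : ℕ)
    (h : rtG (rtRes V f) a b) : rtG f a b := by
  refine ⟨h.1, ?_⟩
  have := h.2
  unfold rtRes at this
  split_ifs at this
  exact this

lemma rtRes_P2 (ℓ : ℕ) (V : Finset ℕ) (f : Finset ℕ → Option (Finset ℕ))
    (h : RtP2 ℓ (rtG f) (rtW f)) : RtP2 ℓ (rtG (rtRes V f)) (rtW (rtRes V f)) := by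
  intro v u hv hvu hG hnG hu
  have hu' : u ∈ rtW f (v (ℓ - 1)) (v 0) ∧ f {v (ℓ - 1), v 0} ≠ none := by
    unfold rtW rtRes at hu
    split_ifs at hu
    · refine ⟨hu, ?_⟩
      intro h
      rw [h] at hu
      simp at hu
    · simp at hu
  exact h v u hv hvu (fun i hi => rtRes_G V f _ _ (hG i hi)) (fun h' => hu'.2 h'.2) hu'.1

lemma rt_small_sets (n s : ℕ) (hn : s + 2 ≤ n) :
    ((vtx n).powerset.filter fun A => A.card ≤ s).card + 1 ≤ n ^ (s + 1) := by
  have h1 : ((vtx n).powerset.filter fun A => A.card ≤ s) ⊆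
      (Finset.range (s + 1)).biUnion fun i => (vtx n).powersetCard i := by
    intro A hA
    obtain ⟨h1, h2⟩ := Finset.mem_filter.1 hA
    rw [Finset.mem_biUnion]
    refine ⟨A.card, Finset.mem_range.2 (by omega), ?_⟩
    rw [Finset.mem_powersetCard]
    exact ⟨Finset.mem_powerset.1 h1, rfl⟩
  have h2 := (Finset.card_le_card h1).trans (Finset.card_biUnion_le_card_mul _ _ (n ^ s) (by
    intro i hi
    rw [Finset.card_powersetCard]
    refine (Nat.choose_le_pow _ _).trans ?_
    have : (vtx n).card = n := by simp [vtx]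
    rw [this]
    exact Nat.pow_le_pow_right (by omega) (by have := Finset.mem_range.1 hi; omega)))
  rw [Finset.card_range] at h2
  have h3 : 1 ≤ n ^ s := Nat.one_le_pow _ _ (by omega)
  have h4 : (s + 2) * n ^ s ≤ n * n ^ s := Nat.mul_le_mul_right _ hn
  rw [pow_succ']
  have h5 : (s + 2) * n ^ s = (s + 1) * n ^ s + n ^ s := by ring
  omega

theorem rt_container {α : Type} [DecidableEq α] (k ℓ : ℕ) (hk : 5 ≤ k) (hℓ : 3 ≤ ℓ)
    (C : Finset (Finset α)) (hC : IsLinearCycle k ℓ C) (ε : ℝ) (hε : 0 < ε) :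
    ∃ n0 : ℕ, ∀ n, n0 ≤ n → ∃ 𝓒 : Finset (Finset (Finset ℕ)),
      𝓒.card ≤ (n ^ ((k + 3) * ℓ + 1)) ^ (n ^ 2) ∧
      (∀ 𝒢 ∈ 𝓒, 𝒢 ⊆ (vtx n).powersetCard k ∧
        (𝒢.card : ℝ) ≤ (((ℓ - 1) / 2 : ℕ) + ε : ℝ) * (n.choose (k - 1) : ℝ)) ∧
      ∀ F ⊆ (vtx n).powersetCard k, HFree C F → ∀ m : ℝ, 0 < m →
        (∀ B : Finset ℕ, B.card = 4 → (((k + 3) * ℓ : ℕ) : ℝ) * (rtDeg F B : ℝ) < m) →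
        ∃ 𝒢 ∈ 𝓒, (F.card : ℝ) ≤ ((F ∩ 𝒢).card : ℝ) + (n : ℝ) ^ 2 * (((k + 3) * ℓ : ℕ) : ℝ) * m := by
  have hs1 : 1 ≤ (k + 3) * ℓ := Nat.mul_pos (by omega) (by omega)
  obtain ⟨n0, hn0⟩ := rt_det k ℓ ((k + 3) * ℓ) hk hℓ hs1 ε hε
  refine ⟨n0 + ((k + 3) * ℓ + 2), ?_⟩
  intro n hn
  set s := (k + 3) * ℓ with hs
  set P := (vtx n).powersetCard 2 with hP
  set A0 := (vtx n).powerset.filter fun A => A.card ≤ s with hA0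
  set T : Finset (Option (Finset ℕ)) := insert none (A0.image some) with hT
  have hTc : T.card ≤ n ^ (s + 1) := by
    refine (Finset.card_insert_le _ _).trans ?_
    refine le_trans ?_ (rt_small_sets n s (by omega))
    exact Nat.add_le_add_right Finset.card_image_le _
  have hPc : P.card ≤ n ^ 2 := by
    rw [hP, Finset.card_powersetCard]
    refine (Nat.choose_le_pow _ _).trans ?_
    simp [vtx]
  have hTm : ∀ o ∈ T, (o.getD ∅).card ≤ s := by
    intro o ho
    rcases Finset.mem_insert.1 ho with rfl | h
    · simp
    · obtain ⟨A, hA, rfl⟩ := Finset.mem_image.1 h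
      simpa using (Finset.mem_filter.1 hA).2
  have hT0 : some ∅ ∈ T := by
    apply Finset.mem_insert_of_mem
    apply Finset.mem_image_of_mem
    rw [hA0, Finset.mem_filter]
    simp
  let dec : ({q // q ∈ P} → {o // o ∈ T}) → Finset ℕ → Option (Finset ℕ) := fun g q =>
    if h : q ∈ P then (g ⟨q, h⟩).1 else some ∅
  have hdec : ∀ g q, dec g q ∈ T := by
    intro g q
    simp only [dec]
    split_ifs with h
    · exact (g ⟨q, h⟩).2
    · exact hT0
  let valid : ({q // q ∈ P} → {o // o ∈ T}) → Prop := fun g =>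
    ¬ RtCyc ℓ (rtG (dec g)) ∧ RtP2 ℓ (rtG (dec g)) (rtW (dec g))
  let fam : ({q // q ∈ P} → {o // o ∈ T}) → Finset (Finset ℕ) := fun g =>
    ((vtx n).powersetCard k).filter (RtGood (rtG (dec g)) (rtW (dec g)))
  refine ⟨(Finset.univ.filter valid).image fam, ?_, ?_, ?_⟩
  · refine Finset.card_image_le.trans ((Finset.card_filter_le _ _).trans ?_)
    rw [Finset.card_univ, Fintype.card_fun, Fintype.card_coe, Fintype.card_coe]
    refine (Nat.pow_le_pow_left hTc _).trans ?_
    exact Nat.pow_le_pow_right (Nat.pow_pos (by omega)) hPc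
  · intro 𝒢 h𝒢
    obtain ⟨g, hg, rfl⟩ := Finset.mem_image.1 h𝒢
    obtain ⟨hv1, hv2⟩ := (Finset.mem_filter.1 hg).2
    refine ⟨Finset.filter_subset _ _, ?_⟩
    refine hn0 n (by omega) (rtG (dec g)) (rtW (dec g)) (rtG_symm _) ?_ ?_ ?_ ?_ hv1 hv2
    · intro a h
      exact h.1 rfl
    · intro a b
      exact (Finset.card_le_card Finset.sdiff_subset).trans (hTm _ (hdec g _))
    · intro a b
      simp [rtW]
    · intro a b
      simp [rtW]
  · intro F hF hfree m hm h4
    obtain ⟨f, hf1, hf2, hf3, hf4⟩ := rt_finger k ℓ n hℓ C hC F hF hfree m hm h4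
    have hfT : ∀ q, f q ∈ T := by
      intro q
      rcases hf1 q with h | ⟨A, h, hA1, hA2⟩
      · rw [h]; exact Finset.mem_insert_self _ _
      · rw [h]
        apply Finset.mem_insert_of_mem
        apply Finset.mem_image_of_mem
        rw [hA0, Finset.mem_filter, Finset.mem_powerset]
        exact ⟨hA1, hA2⟩
    let g : {q // q ∈ P} → {o // o ∈ T} := fun q => ⟨f q.1, hfT q.1⟩
    have hdg : dec g = rtRes (vtx n) f := by
      funext q
      simp only [dec, rtRes, g]
      by_cases h : q ∈ P
      · rw [dif_pos h, if_pos h]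
      · rw [dif_neg h, if_neg h]
    refine ⟨fam g, ?_, ?_⟩
    · apply Finset.mem_image_of_mem
      rw [Finset.mem_filter]
      refine ⟨Finset.mem_univ _, ?_⟩
      simp only [valid]
      rw [hdg]
      refine ⟨?_, rtRes_P2 ℓ _ f hf3⟩
      rintro ⟨v, hv1, hv2, hv3⟩
      exact hf2 ⟨v, hv1, fun i hi => rtRes_G _ f _ _ (hv2 i hi), rtRes_G _ f _ _ hv3⟩
    · have h1 := Finset.card_filter_add_card_filter_not (s := F) (fun E => RtGood (rtG f) (rtW f) E)
      have h2 : (F.filter fun E => RtGood (rtG f) (rtW f) E).card ≤ (F ∩ fam g).card := by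
        apply Finset.card_le_card
        intro E hE
        obtain ⟨hE1, hE2⟩ := Finset.mem_filter.1 hE
        rw [Finset.mem_inter]
        refine ⟨hE1, ?_⟩
        simp only [fam]
        rw [Finset.mem_filter, hdg]
        exact ⟨hF hE1, rtRes_good _ f E (Finset.mem_powersetCard.1 (hF hE1)).1 hE2⟩
      have h3 : (F.card : ℝ) = ((F.filter fun E => RtGood (rtG f) (rtW f) E).card : ℝ) +
          ((F.filter fun E => ¬ RtGood (rtG f) (rtW f) E).card : ℝ) := by
        exact_mod_cast h1.symm
      have h4' : ((F.filter fun E => RtGood (rtG f) (rtW f) E).card : ℝ) ≤ ((F ∩ fam g).card : ℝ) := by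
        exact_mod_cast h2
      rw [h3]
      exact add_le_add h4' hf4



lemma rt_star_free {α : Type} [DecidableEq α] (k ℓ t : ℕ) (C : Finset (Finset α))
    (hC : IsLinearCycle k ℓ C) (ht : 2 * t < ℓ) (S : Finset ℕ) (hS : S.card ≤ t)
    (F : Finset (Finset ℕ)) (hF : ∀ E ∈ F, (E ∩ S).Nonempty) : HFree C F := by
  rintro K hK ⟨φ, hφ, hKe⟩
  obtain ⟨E, h1, h2, h3, h4, h5, h6⟩ := hC
  have htri := lc_triple ℓ E h3 h4 h5
  have hEC : ∀ i < ℓ, E i ∈ C := fun i hi => by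
    rw [h6]; exact Finset.mem_image_of_mem _ (Finset.mem_range.2 hi)
  have hEv : ∀ i < ℓ, ∀ x ∈ E i, x ∈ vertexSet C := by
    intro i hi x hx
    unfold vertexSet
    rw [Finset.mem_sup]
    exact ⟨E i, hEC i hi, hx⟩
  have hch : ∀ i, ∃ x : ℕ, i < ℓ → x ∈ S ∧ ∃ y ∈ E i, φ y = x := by
    intro i
    by_cases hi : i < ℓ
    · have : (E i).image φ ∈ F := hK (by rw [hKe]; exact Finset.mem_image_of_mem _ (hEC i hi))
      obtain ⟨x, hx⟩ := hF _ this
      rw [Finset.mem_inter, Finset.mem_image] at hx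
      exact ⟨x, fun _ => ⟨hx.2, hx.1⟩⟩
    · exact ⟨0, fun h => absurd h hi⟩
  choose x hx using hch
  obtain ⟨z, _, hzc⟩ := Finset.exists_lt_card_fiber_of_mul_lt_card_of_maps_to (s := Finset.range ℓ)
    (t := S) (f := x) (n := 2) (fun i hi => (hx i (Finset.mem_range.1 hi)).1) (by
      rw [Finset.card_range]; omega)
  obtain ⟨i, j, m, hi, hj, hm, hij, him, hjm⟩ := Finset.two_lt_card_iff.1 hzc
  simp only [Finset.mem_filter, Finset.mem_range] at hi hj hm
  obtain ⟨-, yi, hyi, ei⟩ := hx i hi.1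
  obtain ⟨-, yj, hyj, ej⟩ := hx j hj.1
  obtain ⟨-, ym, hym, em⟩ := hx m hm.1
  have e1 : yi = yj := hφ (hEv i hi.1 yi hyi) (hEv j hj.1 yj hyj) (by rw [ei, ej, hi.2, hj.2])
  have e2 : yi = ym := hφ (hEv i hi.1 yi hyi) (hEv m hm.1 ym hym) (by rw [ei, em, hi.2, hm.2])
  subst e1
  subst e2
  exact htri i hi.1 j hj.1 m hm.1 hij him hjm yi hyi hyj hym

lemma rt_choose_sub (n r t : ℕ) : n.choose (r + 1) ≤ (n - t).choose (r + 1) + t * n ^ r := by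
  induction t with
  | zero => simp
  | succ t ih =>
    have h1 : (n - t).choose (r + 1) ≤ (n - (t + 1)).choose (r + 1) + n ^ r := by
      rcases Nat.eq_zero_or_pos (n - t) with h | h
      · have : n - (t + 1) = n - t := by omega
        rw [this]; omega
      · obtain ⟨m, hm⟩ : ∃ m, n - t = m + 1 := ⟨n - t - 1, by omega⟩
        have h2 : n - (t + 1) = m := by omega
        rw [hm, h2, Nat.choose_succ_succ, Nat.succ_eq_add_one]
        have h3 : m.choose r ≤ n ^ r := (Nat.choose_le_pow _ _).trans (Nat.pow_le_pow_left (by omega) _)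
        omega
    have : (t + 1) * n ^ r = t * n ^ r + n ^ r := by ring
    omega

/-- the extremal star family -/
noncomputable def rtStar (n k t : ℕ) : Finset (Finset ℕ) :=
  (Finset.Icc 1 t ×ˢ ((vtx n \ Finset.Icc 1 t).powersetCard (k - 1))).image fun q => insert q.1 q.2

lemma rtStar_card (n k t : ℕ) (htn : t ≤ n) : (rtStar n k t).card = t * (n - t).choose (k - 1) := by
  unfold rtStar
  rw [Finset.card_image_of_injOn, Finset.card_product, Finset.card_powersetCard,
    Finset.card_sdiff_of_subset]
  · simp [vtx]
  · exact Finset.Icc_subset_Icc_right htn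
  · rintro ⟨a, A⟩ hA ⟨b, B⟩ hB h
    simp only [Finset.coe_product, Set.mem_prod, Finset.mem_coe, Finset.mem_powersetCard] at hA hB h
    have hd : ∀ x ∈ Finset.Icc 1 t, x ∉ A ∧ x ∉ B := by
      intro x hx
      exact ⟨fun h => (Finset.mem_sdiff.1 (hA.2.1 h)).2 hx, fun h => (Finset.mem_sdiff.1 (hB.2.1 h)).2 hx⟩
    have hab : a = b := by
      have : a ∈ insert b B := by rw [← h]; exact Finset.mem_insert_self _ _
      rcases Finset.mem_insert.1 this with h | h
      · exact h
      · exact absurd h (hd a hA.1).2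
    subst hab
    have : A = B := by
      rw [← Finset.erase_insert (hd a hA.1).1, ← Finset.erase_insert (hd a hA.1).2, h]
    rw [this]

lemma rtStar_sub (n k t : ℕ) (hk : 1 ≤ k) (htn : t ≤ n) : rtStar n k t ⊆ (vtx n).powersetCard k := by
  intro E hE
  obtain ⟨⟨a, A⟩, hA, rfl⟩ := Finset.mem_image.1 hE
  simp only [Finset.mem_product, Finset.mem_powersetCard] at hA
  have haA : a ∉ A := fun h => (Finset.mem_sdiff.1 (hA.2.1 h)).2 hA.1
  rw [Finset.mem_powersetCard]
  constructor
  · apply Finset.insert_subset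
    · exact Finset.Icc_subset_Icc_right htn hA.1
    · exact hA.2.1.trans Finset.sdiff_subset
  · simp only
    rw [Finset.card_insert_of_notMem haA, hA.2.2]
    omega

lemma rtStar_meet (n k t : ℕ) (E : Finset ℕ) (hE : E ∈ rtStar n k t) :
    (E ∩ Finset.Icc 1 t).Nonempty := by
  obtain ⟨⟨a, A⟩, hA, rfl⟩ := Finset.mem_image.1 hE
  simp only [Finset.mem_product] at hA
  exact ⟨a, Finset.mem_inter.2 ⟨Finset.mem_insert_self _ _, hA.1⟩⟩

lemma rtStar_large (k t : ℕ) (hk : 5 ≤ k) (ε : ℝ) (hε : 0 < ε) : ∃ n0 : ℕ, ∀ n, n0 ≤ n →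
    ((t : ℝ) - ε) * (n.choose (k - 1) : ℝ) ≤ ((rtStar n k t).card : ℝ) := by
  obtain ⟨K, hK⟩ : ∃ K : ℝ, K = 2 ^ (k - 1) * ((k - 1).factorial : ℝ) := ⟨_, rfl⟩
  have hK0 : 0 < K := by
    have : (0 : ℝ) < (k - 1).factorial := by exact_mod_cast (k - 1).factorial_pos
    rw [hK]
    positivity
  obtain ⟨n1, hn1⟩ : ∃ r : ℕ, r = ⌈(t : ℝ) ^ 2 * K / ε⌉₊ := ⟨_, rfl⟩
  refine ⟨n1 + t + 2 * k, ?_⟩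
  intro n hn
  have hchoose := rt_choose_ge (k - 1) n (by omega)
  rw [← hK] at hchoose
  rw [rtStar_card n k t (by omega)]
  have h1 := rt_choose_sub n (k - 2) t
  rw [show k - 2 + 1 = k - 1 by omega] at h1
  have h1' : (n.choose (k - 1) : ℝ) ≤ ((n - t).choose (k - 1) : ℝ) + t * (n : ℝ) ^ (k - 2) := by
    exact_mod_cast h1
  have hn0 : (0 : ℝ) < n := by
    have : 0 < n := by omega
    exact_mod_cast this
  have h2 : (t : ℝ) ^ 2 * K ≤ ε * n := by
    have : (t : ℝ) ^ 2 * K / ε ≤ n := by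
      refine (Nat.le_ceil _).trans ?_
      rw [← hn1]
      have : n1 ≤ n := by omega
      exact_mod_cast this
    rw [div_le_iff₀ hε] at this
    linarith
  have h3 : (t : ℝ) ^ 2 * (n : ℝ) ^ (k - 2) ≤ ε * (n.choose (k - 1) : ℝ) := by
    have h4 : (n : ℝ) ^ (k - 2) * n = (n : ℝ) ^ (k - 1) := by
      rw [← pow_succ]; congr 1; omega
    have h5 : ((t : ℝ) ^ 2 * (n : ℝ) ^ (k - 2)) * n ≤ (ε * (n.choose (k - 1) : ℝ)) * n := by
      calc ((t : ℝ) ^ 2 * (n : ℝ) ^ (k - 2)) * n = (t : ℝ) ^ 2 * (n : ℝ) ^ (k - 1) := by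
            rw [mul_assoc, h4]
        _ ≤ (t : ℝ) ^ 2 * (K * (n.choose (k - 1) : ℝ)) := mul_le_mul_of_nonneg_left hchoose (by positivity)
        _ = ((t : ℝ) ^ 2 * K) * (n.choose (k - 1) : ℝ) := by ring
        _ ≤ (ε * n) * (n.choose (k - 1) : ℝ) := mul_le_mul_of_nonneg_right h2 (by positivity)
        _ = _ := by ring
    exact le_of_mul_le_mul_right h5 hn0
  push_cast
  have h6 := mul_le_mul_of_nonneg_left h1' (show (0 : ℝ) ≤ t by positivity)
  have h7 : (t : ℝ) * (((n - t).choose (k - 1) : ℝ) + t * (n : ℝ) ^ (k - 2)) =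
    t * ((n - t).choose (k - 1) : ℝ) + (t : ℝ) ^ 2 * (n : ℝ) ^ (k - 2) := by ring
  rw [sub_mul]
  linarith



noncomputable def rtWt (k n : ℕ) (p : ℝ) (G : Finset (Finset ℕ)) : ℝ :=
  p ^ G.card * (1 - p) ^ (((vtx n).powersetCard k).card - G.card)

lemma pe_eq (k n : ℕ) (p : ℝ) (A : Finset (Finset ℕ) → Prop) :
    probEvent k n p A = ∑ G ∈ ((vtx n).powersetCard k).powerset, if A G then rtWt k n p G else 0 := by
  unfold probEvent
  rw [Finset.sum_filter]
  rfl

lemma rtWt_nonneg (k n : ℕ) (p : ℝ) (hp : p ∈ Set.Icc (0 : ℝ) 1) (G : Finset (Finset ℕ)) :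
    0 ≤ rtWt k n p G := by
  unfold rtWt
  exact mul_nonneg (pow_nonneg hp.1 _) (pow_nonneg (by linarith [hp.2]) _)

lemma rt_mgf (k n : ℕ) (p x : ℝ) (𝒢 : Finset (Finset ℕ)) (h𝒢 : 𝒢 ⊆ (vtx n).powersetCard k) :
    ∑ G ∈ ((vtx n).powersetCard k).powerset, rtWt k n p G * x ^ (G ∩ 𝒢).card =
      (1 - p + p * x) ^ 𝒢.card := by
  set U := (vtx n).powersetCard k with hU
  have h1 := Finset.prod_add (fun E => p * (if E ∈ 𝒢 then x else 1)) (fun _ => 1 - p) U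
  have h2 : ∏ i ∈ U, (p * (if i ∈ 𝒢 then x else 1) + (1 - p)) = (1 - p + p * x) ^ 𝒢.card := by
    have : ∀ i ∈ U, (p * (if i ∈ 𝒢 then x else 1) + (1 - p)) = if i ∈ 𝒢 then (1 - p + p * x) else 1 := by
      intro i _
      split_ifs <;> ring
    rw [Finset.prod_congr rfl this, ← Finset.prod_filter, Finset.prod_const]
    congr 2
    ext i
    simp only [Finset.mem_filter]
    exact ⟨fun h => h.2, fun h => ⟨h𝒢 h, h⟩⟩
  rw [← h2, h1]
  apply Finset.sum_congr rfl
  intro G hG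
  rw [Finset.mem_powerset] at hG
  rw [Finset.prod_mul_distrib, Finset.prod_const, Finset.prod_const, ← Finset.prod_filter,
    Finset.prod_const, Finset.card_sdiff_of_subset hG, Finset.filter_mem_eq_inter]
  unfold rtWt
  rw [← hU]
  ring

lemma pe_total (k n : ℕ) (p : ℝ) : ∑ G ∈ ((vtx n).powersetCard k).powerset, rtWt k n p G = 1 := by
  have := rt_mgf k n p 1 ∅ (by simp)
  simpa using this

lemma pe_nonneg (k n : ℕ) (p : ℝ) (hp : p ∈ Set.Icc (0 : ℝ) 1) (A : Finset (Finset ℕ) → Prop) :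
    0 ≤ probEvent k n p A := by
  rw [pe_eq]
  apply Finset.sum_nonneg
  intro G _
  split_ifs
  · exact rtWt_nonneg k n p hp G
  · exact le_rfl

lemma pe_le_one (k n : ℕ) (p : ℝ) (hp : p ∈ Set.Icc (0 : ℝ) 1) (A : Finset (Finset ℕ) → Prop) :
    probEvent k n p A ≤ 1 := by
  rw [pe_eq, ← pe_total k n p]
  apply Finset.sum_le_sum
  intro G _
  split_ifs
  · exact le_rfl
  · exact rtWt_nonneg k n p hp G

lemma pe_cover (k n : ℕ) (p : ℝ) (hp : p ∈ Set.Icc (0 : ℝ) 1) (A B D : Finset (Finset ℕ) → Prop)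
    (h : ∀ G ⊆ (vtx n).powersetCard k, A G → B G ∨ D G) :
    probEvent k n p A ≤ probEvent k n p B + probEvent k n p D := by
  rw [pe_eq, pe_eq, pe_eq, ← Finset.sum_add_distrib]
  apply Finset.sum_le_sum
  intro G hG
  rw [Finset.mem_powerset] at hG
  have h0 := rtWt_nonneg k n p hp G
  by_cases hA : A G
  · rw [if_pos hA]
    rcases h G hG hA with hB | hD
    · rw [if_pos hB]
      split_ifs <;> linarith
    · rw [if_pos hD]
      split_ifs <;> linarith
  · rw [if_neg hA]
    split_ifs <;> linarith

lemma pe_true (k n : ℕ) (p : ℝ) : probEvent k n p (fun _ => True) = 1 := by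
  rw [pe_eq, ← pe_total k n p]
  simp

lemma pe_union {ι : Type} (k n : ℕ) (p : ℝ) (hp : p ∈ Set.Icc (0 : ℝ) 1) (I : Finset ι)
    (A : ι → Finset (Finset ℕ) → Prop) (D : Finset (Finset ℕ) → Prop) (b : ℝ)
    (h : ∀ G ⊆ (vtx n).powersetCard k, D G → ∃ i ∈ I, A i G)
    (hb : ∀ i ∈ I, probEvent k n p (A i) ≤ b) :
    probEvent k n p D ≤ I.card * b := by
  have h1 : probEvent k n p D ≤ ∑ i ∈ I, probEvent k n p (A i) := by
    simp only [pe_eq]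
    rw [Finset.sum_comm]
    apply Finset.sum_le_sum
    intro G hG
    rw [Finset.mem_powerset] at hG
    have h0 := rtWt_nonneg k n p hp G
    have hn : ∀ i ∈ I, 0 ≤ (if A i G then rtWt k n p G else 0) := by
      intro i _
      split_ifs <;> linarith
    by_cases hD : D G
    · obtain ⟨i, hi, hA⟩ := h G hG hD
      have := Finset.single_le_sum hn hi
      rw [if_pos hA] at this
      rw [if_pos hD]
      exact this
    · rw [if_neg hD]
      exact Finset.sum_nonneg hn
  refine h1.trans ?_
  refine (Finset.sum_le_sum hb).trans ?_
  rw [Finset.sum_const, nsmul_eq_mul]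

lemma pe_markov (k n : ℕ) (p : ℝ) (hp : p ∈ Set.Icc (0 : ℝ) 1) (x c : ℝ) (hx : 0 < x)
    (𝒢 : Finset (Finset ℕ)) (h𝒢 : 𝒢 ⊆ (vtx n).powersetCard k) (A : Finset (Finset ℕ) → Prop)
    (h : ∀ G ⊆ (vtx n).powersetCard k, A G → c ≤ (G ∩ 𝒢).card * Real.log x) :
    probEvent k n p A ≤ Real.exp (p * (x - 1) * 𝒢.card - c) := by
  have h1 : Real.exp c * probEvent k n p A ≤ (1 - p + p * x) ^ 𝒢.card := by
    rw [pe_eq, ← rt_mgf k n p x 𝒢 h𝒢, Finset.mul_sum]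
    apply Finset.sum_le_sum
    intro G hG
    rw [Finset.mem_powerset] at hG
    have h0 := rtWt_nonneg k n p hp G
    split_ifs with hA
    · have h2 : Real.exp c ≤ x ^ (G ∩ 𝒢).card := by
        rw [← Real.exp_log hx, ← Real.exp_nat_mul]
        exact Real.exp_le_exp.2 (h G hG hA)
      rw [mul_comm]
      exact mul_le_mul_of_nonneg_left h2 h0
    · rw [mul_zero]
      positivity
  have h2 : (1 - p + p * x) ^ 𝒢.card ≤ Real.exp (p * (x - 1) * 𝒢.card) := by
    have h3 : 1 - p + p * x ≤ Real.exp (p * (x - 1)) := by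
      have := Real.add_one_le_exp (p * (x - 1))
      linarith
    have h4 : 0 ≤ 1 - p + p * x := by
      have := mul_nonneg hp.1 hx.le
      linarith [hp.2]
    refine (pow_le_pow_left₀ h4 h3 _).trans ?_
    rw [← Real.exp_nat_mul, mul_comm]
  rw [Real.exp_sub, le_div_iff₀ (Real.exp_pos c), mul_comm]
  exact h1.trans h2



lemma pe_upper (a b : ℝ) (ha : 0 < a) (hab : a < b) : ∃ c : ℝ, 0 < c ∧
    ∀ (k n : ℕ) (p M : ℝ), p ∈ Set.Icc (0 : ℝ) 1 → 0 ≤ M → ∀ 𝒢 : Finset (Finset ℕ),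
      𝒢 ⊆ (vtx n).powersetCard k → (𝒢.card : ℝ) ≤ a * M →
      probEvent k n p (fun G => b * p * M ≤ ((G ∩ 𝒢).card : ℝ)) ≤ Real.exp (-(c * (p * M))) := by
  obtain ⟨d, hd⟩ : ∃ d : ℝ, d = (a + b) / 2 := ⟨_, rfl⟩
  have had : a < d := by linarith
  have hdb : d < b := by linarith
  have hd0 : 0 < d := by linarith
  have hb0 : 0 < b := by linarith
  refine ⟨(b / d - 1) * (d - a), ?_, ?_⟩
  · have : 1 < b / d := by rw [lt_div_iff₀ hd0]; linarith
    exact mul_pos (by linarith) (by linarith)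
  intro k n p M hp hM 𝒢 h𝒢 hc
  have hx1 : 1 < b / d := by rw [lt_div_iff₀ hd0]; linarith
  have hlog0 : 0 ≤ Real.log (b / d) := Real.log_nonneg hx1.le
  have hlog := Real.one_sub_inv_le_log_of_pos (show 0 < b / d by positivity)
  refine (pe_markov k n p hp (b / d) (b * p * M * Real.log (b / d)) (by positivity) 𝒢 h𝒢 _ ?_).trans ?_
  · intro G _ hA
    exact mul_le_mul_of_nonneg_right hA hlog0
  · apply Real.exp_le_exp.2
    have hpM : 0 ≤ p * M := mul_nonneg hp.1 hM
    have h1 : p * (b / d - 1) * 𝒢.card ≤ p * (b / d - 1) * (a * M) :=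
      mul_le_mul_of_nonneg_left hc (mul_nonneg hp.1 (by linarith))
    have h2 : b * p * M * (1 - (b / d)⁻¹) ≤ b * p * M * Real.log (b / d) := by
      apply mul_le_mul_of_nonneg_left hlog
      have := mul_nonneg hb0.le hpM
      linarith
    have h3 : b * p * M * (1 - (b / d)⁻¹) = p * M * (b - d) := by
      field_simp
    have h4 : p * (b / d - 1) * (a * M) - p * M * (b - d) = -((b / d - 1) * (d - a) * (p * M)) := by
      field_simp
      ring
    linarith

lemma pe_lower (a b : ℝ) (hb : 0 < b) (hab : b < a) : ∃ c : ℝ, 0 < c ∧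
    ∀ (k n : ℕ) (p M : ℝ), p ∈ Set.Icc (0 : ℝ) 1 → 0 ≤ M → ∀ 𝒢 : Finset (Finset ℕ),
      𝒢 ⊆ (vtx n).powersetCard k → a * M ≤ (𝒢.card : ℝ) →
      probEvent k n p (fun G => ((G ∩ 𝒢).card : ℝ) ≤ b * p * M) ≤ Real.exp (-(c * (p * M))) := by
  obtain ⟨d, hd⟩ : ∃ d : ℝ, d = (a + b) / 2 := ⟨_, rfl⟩
  have had : d < a := by linarith
  have hdb : b < d := by linarith
  have hd0 : 0 < d := by linarith
  have hx1 : b / d < 1 := by rw [div_lt_iff₀ hd0]; linarith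
  refine ⟨(1 - b / d) * (a - d), mul_pos (by linarith) (by linarith), ?_⟩
  intro k n p M hp hM 𝒢 h𝒢 hc
  have hx0 : 0 < b / d := by positivity
  have hlog0 : Real.log (b / d) ≤ 0 := Real.log_nonpos hx0.le hx1.le
  have hlog := Real.one_sub_inv_le_log_of_pos hx0
  refine (pe_markov k n p hp (b / d) (b * p * M * Real.log (b / d)) hx0 𝒢 h𝒢 _ ?_).trans ?_
  · intro G _ hA
    exact mul_le_mul_of_nonpos_right hA hlog0
  · apply Real.exp_le_exp.2
    have hpM : 0 ≤ p * M := mul_nonneg hp.1 hM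
    have h1 : p * (1 - b / d) * (a * M) ≤ p * (1 - b / d) * 𝒢.card :=
      mul_le_mul_of_nonneg_left hc (mul_nonneg hp.1 (by linarith))
    have h2 : b * p * M * (1 - (b / d)⁻¹) ≤ b * p * M * Real.log (b / d) := by
      apply mul_le_mul_of_nonneg_left hlog
      have := mul_nonneg hb.le hpM
      linarith
    have h3 : b * p * M * (1 - (b / d)⁻¹) = p * M * (b - d) := by
      field_simp
    have h4 : -(p * (1 - b / d) * (a * M)) - p * M * (b - d) = -((1 - b / d) * (a - d) * (p * M)) := by
      field_simp
      ring
    have h5 : p * (b / d - 1) * 𝒢.card = - (p * (1 - b / d) * 𝒢.card) := by ring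
    linarith

lemma rt_ex_ge {α : Type} [DecidableEq α] (C : Finset (Finset α)) (G F : Finset (Finset ℕ))
    (hF : F ⊆ G) (hfree : HFree C F) : (F.card : ℝ) ≤ (exIn C G : ℝ) := by
  unfold exIn
  have : F.card ≤ (G.powerset.filter (HFree C)).sup Finset.card :=
    Finset.le_sup (f := Finset.card) (Finset.mem_filter.2 ⟨Finset.mem_powerset.2 hF, hfree⟩)
  exact_mod_cast this

lemma rt_ex_lt {α : Type} [DecidableEq α] (C : Finset (Finset α)) (G : Finset (Finset ℕ)) (r : ℝ)
    (hr : 0 ≤ r) (h : r < (exIn C G : ℝ)) : ∃ F ⊆ G, HFree C F ∧ r < (F.card : ℝ) := by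
  by_contra hcon
  push Not at hcon
  have : exIn C G ≤ ⌊r⌋₊ := by
    unfold exIn
    apply Finset.sup_le
    intro F hF
    rw [Finset.mem_filter, Finset.mem_powerset] at hF
    exact Nat.le_floor (hcon F hF.1 hF.2)
  have h2 : (exIn C G : ℝ) ≤ (⌊r⌋₊ : ℝ) := by exact_mod_cast this
  have h3 := Nat.floor_le hr
  linarith

lemma rt_grow (k : ℕ) (p : ℕ → ℝ) 
    (hgrow : Tendsto (fun n : ℕ => p n * (n : ℝ) ^ (k - 3) / (Real.log n) ^ 2) atTop atTop) (R : ℝ) :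
    ∀ᶠ n : ℕ in atTop, R * Real.log n ≤ p n * (n : ℝ) ^ (k - 3) ∧ R ≤ p n * (n : ℝ) ^ (k - 3)
      ∧ R ≤ Real.log n := by
  have hlog : Tendsto (fun n : ℕ => Real.log n) atTop atTop :=
    Real.tendsto_log_atTop.comp tendsto_natCast_atTop_atTop
  filter_upwards [hgrow.eventually_ge_atTop |R|, hlog.eventually_ge_atTop (max R 1)] with n h1 h2
  have h3 : 1 ≤ Real.log n := (le_max_right _ _).trans h2
  have hR := abs_nonneg R
  rw [le_div_iff₀ (by positivity)] at h1
  have h4 : Real.log n ≤ Real.log n ^ 2 := by nlinarith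
  have h5 : |R| * Real.log n ≤ |R| * Real.log n ^ 2 := mul_le_mul_of_nonneg_left h4 hR
  have h6 : R * Real.log n ≤ |R| * Real.log n := mul_le_mul_of_nonneg_right (le_abs_self R) (by linarith)
  have h7 : |R| * 1 ≤ |R| * Real.log n := mul_le_mul_of_nonneg_left h3 hR
  refine ⟨by linarith, ?_, (le_max_left _ _).trans h2⟩
  linarith [le_abs_self R]

lemma rt_pC (k n : ℕ) (hk : 5 ≤ k) (hn : 2 * k ≤ n) (K p : ℝ) (hp : 0 ≤ p)
    (hK : K = 2 ^ (k - 1) * ((k - 1).factorial : ℝ)) :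
    p * (n : ℝ) ^ (k - 3) * (n : ℝ) ^ 2 ≤ K * (p * (n.choose (k - 1) : ℝ)) := by
  have h := rt_choose_ge (k - 1) n (by omega)
  rw [← hK] at h
  have h1 : p * (n : ℝ) ^ (k - 3) * (n : ℝ) ^ 2 = p * (n : ℝ) ^ (k - 1) := by
    rw [mul_assoc, ← pow_add]
    congr 2
    omega
  rw [h1]
  have := mul_le_mul_of_nonneg_left h hp
  linarith

lemma rt_lowfail {α : Type} [DecidableEq α] (k ℓ : ℕ) (hk : 5 ≤ k) (hℓ : 3 ≤ ℓ)
    (C : Finset (Finset α)) (hC : IsLinearCycle k ℓ C)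
    (p : ℕ → ℝ) (hp : ∀ n, p n ∈ Set.Icc (0 : ℝ) 1)
    (hgrow : Tendsto (fun n : ℕ => p n * (n : ℝ) ^ (k - 3) / (Real.log n) ^ 2)
      atTop atTop) (ε : ℝ) (hε : 0 < ε) :
    ∀ᶠ n : ℕ in atTop, probEvent k n (p n) (fun G =>
      ¬ ((((ℓ - 1) / 2 : ℕ)) - ε : ℝ) * p n * (n.choose (k - 1) : ℝ) ≤ (exIn C G : ℝ)) ≤
        Real.exp (- Real.log n) := by
  obtain ⟨t, ht⟩ : ∃ t : ℕ, t = (ℓ - 1) / 2 := ⟨_, rfl⟩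
  have ht1 : (1 : ℝ) ≤ t := by
    have : 1 ≤ t := by omega
    exact_mod_cast this
  obtain ⟨e, he⟩ : ∃ e : ℝ, e = min ε (1 / 2) := ⟨_, rfl⟩
  have he0 : 0 < e := by rw [he]; exact lt_min hε (by norm_num)
  have he1 : e ≤ 1 / 2 := by rw [he]; exact min_le_right _ _
  have he2 : e ≤ ε := by rw [he]; exact min_le_left _ _
  obtain ⟨K, hK⟩ : ∃ K : ℝ, K = 2 ^ (k - 1) * ((k - 1).factorial : ℝ) := ⟨_, rfl⟩
  have hK0 : 0 < K := by
    have : (0 : ℝ) < (k - 1).factorial := by exact_mod_cast (k - 1).factorial_pos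
    rw [hK]
    positivity
  obtain ⟨c, hc, hch⟩ := pe_lower (t - e / 2) (t - e) (by linarith) (by linarith)
  obtain ⟨n0, hn0⟩ := rtStar_large k t hk (e / 2) (by positivity)
  filter_upwards [rt_grow k p hgrow (K / c), rt_grow k p hgrow 1, eventually_ge_atTop (n0 + t + 2 * k)]
    with n hg hg1 hn
  rw [← ht]
  have hM : (0 : ℝ) ≤ (n.choose (k - 1) : ℝ) := by positivity
  have h1 := hch k n (p n) (n.choose (k - 1) : ℝ) (hp n) hM (rtStar n k t)
    (rtStar_sub n k t (by omega) (by omega)) (hn0 n (by omega))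
  have hpM : 0 ≤ p n * (n.choose (k - 1) : ℝ) := mul_nonneg (hp n).1 hM
  have h2 : probEvent k n (p n) (fun G =>
      ¬ ((t : ℝ) - ε) * p n * (n.choose (k - 1) : ℝ) ≤ (exIn C G : ℝ)) ≤
      probEvent k n (p n) (fun G => ((G ∩ rtStar n k t).card : ℝ) ≤ (t - e) * p n * (n.choose (k - 1) : ℝ))
      + probEvent k n (p n) (fun _ => False) := by
    apply pe_cover k n (p n) (hp n)
    intro G _ hG
    left
    have h3 := rt_ex_ge C G (G ∩ rtStar n k t) Finset.inter_subset_left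
      (rt_star_free k ℓ t C hC (by omega) (Finset.Icc 1 t) (by simp) _
        (fun E hE => rtStar_meet n k t E (Finset.mem_inter.1 hE).2))
    push Not at hG
    have h4 : (t - ε) * (p n * (n.choose (k - 1) : ℝ)) ≤ (t - e) * (p n * (n.choose (k - 1) : ℝ)) :=
      mul_le_mul_of_nonneg_right (by linarith) hpM
    linarith
  have h3 : probEvent k n (p n) (fun _ => False) = 0 := by
    rw [pe_eq]; simp
  rw [h3, add_zero] at h2
  refine h2.trans (h1.trans (Real.exp_le_exp.2 ?_))
  have h5 := rt_pC k n hk (by omega) K (p n) (hp n).1 hK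
  have hn1 : (1 : ℝ) ≤ n := by
    have : 1 ≤ n := by omega
    exact_mod_cast this
  have h6 : p n * (n : ℝ) ^ (k - 3) ≤ p n * (n : ℝ) ^ (k - 3) * (n : ℝ) ^ 2 := by
    apply le_mul_of_one_le_right
    · exact mul_nonneg (hp n).1 (by positivity)
    · exact one_le_pow₀ hn1
  have h7 : K / c * Real.log n ≤ K * (p n * (n.choose (k - 1) : ℝ)) := hg.1.trans (h6.trans h5)
  have h8 : Real.log n ≤ c * (p n * (n.choose (k - 1) : ℝ)) := by
    have h9 : K * Real.log n ≤ K * (c * (p n * (n.choose (k - 1) : ℝ))) := by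
      have := mul_le_mul_of_nonneg_left h7 hc.le
      have e1 : c * (K / c * Real.log n) = K * Real.log n := by field_simp
      rw [e1] at this
      linarith
    exact le_of_mul_le_mul_left h9 hK0
  linarith



lemma rt_bad4 (k n s : ℕ) (hk : 5 ≤ k) (hs : 1 ≤ s) (hn : 1 ≤ n) (p δ : ℝ) (hp : p ∈ Set.Icc (0 : ℝ) 1)
    (hδ : 0 < δ) (hlog : 2 * (s : ℝ) / δ ≤ Real.log n)
    (hD : 10 * (s : ℝ) / δ ≤ p * (n : ℝ) ^ (k - 3)) :
    probEvent k n p (fun G => ∃ B ∈ (vtx n).powersetCard 4,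
      δ * (p * (n : ℝ) ^ (k - 3)) ≤ (s : ℝ) * (rtDeg G B : ℝ)) ≤ Real.exp (- Real.log n) := by
  obtain ⟨D, hDd⟩ : ∃ D : ℝ, D = p * (n : ℝ) ^ (k - 3) := ⟨_, rfl⟩
  rw [← hDd] at hD ⊢
  have hs0 : (0 : ℝ) < s := by exact_mod_cast hs
  have hn0 : (0 : ℝ) < n := by exact_mod_cast hn
  have hn1 : (1 : ℝ) ≤ n := by exact_mod_cast hn
  have hl0 : 0 ≤ Real.log n := Real.log_nonneg hn1
  have hkey : ∀ B ∈ (vtx n).powersetCard 4, probEvent k n p (fun G =>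
      δ * D ≤ (s : ℝ) * (rtDeg G B : ℝ)) ≤ Real.exp (-(5 * Real.log n)) := by
    intro B hB
    rw [Finset.mem_powersetCard] at hB
    have h1 := pe_markov k n p hp n (δ * D / s * Real.log n) hn0
      (((vtx n).powersetCard k).filter fun E => B ⊆ E) (Finset.filter_subset _ _)
      (fun G => δ * D ≤ (s : ℝ) * (rtDeg G B : ℝ)) (by
        intro G hG hA
        have e1 : G ∩ (((vtx n).powersetCard k).filter fun E => B ⊆ E) = G.filter fun E => B ⊆ E := by
          ext E
          simp only [Finset.mem_inter, Finset.mem_filter]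
          constructor
          · rintro ⟨a, _, b⟩
            exact ⟨a, b⟩
          · rintro ⟨a, b⟩
            exact ⟨a, hG a, b⟩
        rw [e1]
        apply mul_le_mul_of_nonneg_right _ hl0
        rw [div_le_iff₀ hs0]
        unfold rtDeg at hA
        linarith)
    refine h1.trans (Real.exp_le_exp.2 ?_)
    have h2 : (((((vtx n).powersetCard k).filter fun E => B ⊆ E).card : ℕ) : ℝ) ≤ (n : ℝ) ^ (k - 4) := by
      have h3 := rt_cnt_one (vtx n) B k 4 hB.2
      have h4 : (vtx n \ B).card ≤ n := by
        refine (Finset.card_le_card Finset.sdiff_subset).trans ?_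
        simp [vtx]
      have h5 : (vtx n \ B).card.choose (k - 4) ≤ n ^ (k - 4) :=
        (Nat.choose_le_pow _ _).trans (Nat.pow_le_pow_left h4 _)
      exact_mod_cast h3.trans h5
    have h6 : p * ((n : ℝ) - 1) * (((((vtx n).powersetCard k).filter fun E => B ⊆ E).card : ℕ) : ℝ) ≤ D := by
      have a1 : 0 ≤ p * ((n : ℝ) - 1) := mul_nonneg hp.1 (by linarith)
      have a2 : D = p * n * (n : ℝ) ^ (k - 4) := by
        have : k - 3 = (k - 4) + 1 := by omega
        rw [hDd, this, pow_succ]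
        ring
      have a3 : p * ((n : ℝ) - 1) * (n : ℝ) ^ (k - 4) ≤ p * n * (n : ℝ) ^ (k - 4) := by
        apply mul_le_mul_of_nonneg_right _ (by positivity)
        apply mul_le_mul_of_nonneg_left _ hp.1
        linarith
      rw [a2]
      exact (mul_le_mul_of_nonneg_left h2 a1).trans a3
    have b0 : 0 ≤ D := by rw [hDd]; exact mul_nonneg hp.1 (by positivity)
    -- D ≤ (1/2) (δ D / s) log n, and 5 log n ≤ (1/2) (δ D/s) log n
    rw [div_le_iff₀ hδ] at hlog hD
    have c1 : 2 * D ≤ δ * D / s * Real.log n := by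
      rw [div_mul_eq_mul_div, le_div_iff₀ hs0]
      nlinarith
    have c2 : 10 ≤ δ * D / s := by
      rw [le_div_iff₀ hs0]
      linarith
    have c3 : 10 * Real.log n ≤ δ * D / s * Real.log n := mul_le_mul_of_nonneg_right c2 hl0
    linarith
  have hU := pe_union k n p hp ((vtx n).powersetCard 4)
    (fun B G => δ * D ≤ (s : ℝ) * (rtDeg G B : ℝ))
    (fun G => ∃ B ∈ (vtx n).powersetCard 4, δ * D ≤ (s : ℝ) * (rtDeg G B : ℝ))
    (Real.exp (-(5 * Real.log n))) (fun G _ h => h) hkey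
  refine hU.trans ?_
  have hc : (((vtx n).powersetCard 4).card : ℝ) ≤ (n : ℝ) ^ 4 := by
    rw [Finset.card_powersetCard]
    have : (vtx n).card = n := by simp [vtx]
    rw [this]
    exact_mod_cast Nat.choose_le_pow n 4
  have hexp : (n : ℝ) ^ 4 = Real.exp (4 * Real.log n) := by
    rw [show (4 : ℝ) * Real.log n = ((4 : ℕ) : ℝ) * Real.log n by norm_num, Real.exp_nat_mul,
      Real.exp_log hn0]
  calc _ ≤ (n : ℝ) ^ 4 * Real.exp (-(5 * Real.log n)) :=
        mul_le_mul_of_nonneg_right hc (Real.exp_nonneg _)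
    _ = Real.exp (- Real.log n) := by
        rw [hexp, ← Real.exp_add]
        congr 1
        ring

lemma rt_upfail {α : Type} [DecidableEq α] (k ℓ : ℕ) (hk : 5 ≤ k) (hℓ : 3 ≤ ℓ)
    (C : Finset (Finset α)) (hC : IsLinearCycle k ℓ C)
    (p : ℕ → ℝ) (hp : ∀ n, p n ∈ Set.Icc (0 : ℝ) 1)
    (hgrow : Tendsto (fun n : ℕ => p n * (n : ℝ) ^ (k - 3) / (Real.log n) ^ 2)
      atTop atTop) (ε : ℝ) (hε : 0 < ε) :
    ∀ᶠ n : ℕ in atTop, probEvent k n (p n) (fun G =>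
      ¬ (exIn C G : ℝ) ≤ ((((ℓ - 1) / 2 : ℕ)) + ε : ℝ) * p n * (n.choose (k - 1) : ℝ)) ≤
        Real.exp (- Real.log n) + Real.exp (- Real.log n) := by
  obtain ⟨n0, hn0⟩ := rt_container k ℓ hk hℓ C hC (ε / 3) (by positivity)
  obtain ⟨t, ht⟩ : ∃ t : ℕ, t = (ℓ - 1) / 2 := ⟨_, rfl⟩
  rw [← ht] at hn0 ⊢
  obtain ⟨s, hs⟩ : ∃ s : ℕ, s = (k + 3) * ℓ := ⟨_, rfl⟩
  rw [← hs] at hn0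
  have hs1 : 1 ≤ s := by rw [hs]; nlinarith
  have hs0 : (0 : ℝ) < s := by exact_mod_cast hs1
  have ht0 : (0 : ℝ) ≤ t := by positivity
  obtain ⟨K, hK⟩ : ∃ K : ℝ, K = 2 ^ (k - 1) * ((k - 1).factorial : ℝ) := ⟨_, rfl⟩
  have hK0 : 0 < K := by
    have : (0 : ℝ) < (k - 1).factorial := by exact_mod_cast (k - 1).factorial_pos
    rw [hK]
    positivity
  obtain ⟨c, hc, hch⟩ := pe_upper (t + ε / 3) (t + 2 * ε / 3) (by positivity) (by linarith)
  obtain ⟨δ, hδ⟩ : ∃ δ : ℝ, δ = ε / (3 * s * K) := ⟨_, rfl⟩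
  have hδ0 : 0 < δ := by rw [hδ]; positivity
  have hδ1 : s * δ * K = ε / 3 := by rw [hδ]; field_simp
  filter_upwards [rt_grow k p hgrow (K / c * (s + 2)), rt_grow k p hgrow (2 * s / δ),
    rt_grow k p hgrow (10 * s / δ), rt_grow k p hgrow 1, eventually_ge_atTop (n0 + 2 * k)]
    with n hg hg2 hg10 hg1 hn
  obtain ⟨𝓒, hcard, hsmall, hcont⟩ := hn0 n (by omega)
  have hn1 : 1 ≤ n := by omega
  have hn1r : (1 : ℝ) ≤ n := by exact_mod_cast hn1
  have hn0r : (0 : ℝ) < n := by linarith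
  have hl1 : 1 ≤ Real.log n := hg1.2.2
  have hpC := rt_pC k n hk (by omega) K (p n) (hp n).1 hK
  have hM : (0 : ℝ) ≤ (n.choose (k - 1) : ℝ) := by positivity
  have hb4 := rt_bad4 k n s hk hs1 hn1 (p n) δ (hp n) hδ0 hg2.2.2 hg10.2.1
  obtain ⟨D, hD⟩ : ∃ D : ℝ, D = p n * (n : ℝ) ^ (k - 3) := ⟨_, rfl⟩
  obtain ⟨M, hMd⟩ : ∃ M : ℝ, M = (n.choose (k - 1) : ℝ) := ⟨_, rfl⟩
  rw [← hMd] at hpC hM hsmall ⊢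
  rw [← hD] at hpC hb4 hg hg1
  have hpM : 0 ≤ p n * M := mul_nonneg (hp n).1 hM
  have hD0 : 0 < D := by linarith [hg1.2.1]
  have hm0 : 0 < δ * D := by positivity
  have hU := pe_union k n (p n) (hp n) 𝓒
    (fun 𝒢 G => (t + 2 * ε / 3) * p n * M ≤ ((G ∩ 𝒢).card : ℝ))
    (fun G => ∃ 𝒢 ∈ 𝓒, (t + 2 * ε / 3) * p n * M ≤ ((G ∩ 𝒢).card : ℝ))
    (Real.exp (-(c * (p n * M)))) (fun G _ h => h)
    (fun 𝒢 h => hch k n (p n) M (hp n) hM 𝒢 (hsmall 𝒢 h).1 (hsmall 𝒢 h).2)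
  refine (pe_cover k n (p n) (hp n) _ _ _ ?_).trans (add_le_add hb4 (hU.trans ?_))
  · intro G hG hbad
    by_cases h4 : ∃ B ∈ (vtx n).powersetCard 4, δ * D ≤ (s : ℝ) * (rtDeg G B : ℝ)
    · exact Or.inl h4
    right
    push Not at h4 hbad
    obtain ⟨F, hFG, hFf, hFc⟩ := rt_ex_lt C G _ (by
      rw [mul_assoc]
      exact mul_nonneg (by linarith) hpM) hbad
    obtain ⟨𝒢, h𝒢, hle⟩ := hcont F (hFG.trans hG) hFf (δ * D) hm0 (by
      intro B hB
      by_cases hBv : B ⊆ vtx n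
      · have h5 := h4 B (Finset.mem_powersetCard.2 ⟨hBv, hB⟩)
        have h6 : (rtDeg F B : ℝ) ≤ (rtDeg G B : ℝ) := by
          have : rtDeg F B ≤ rtDeg G B :=
            Finset.card_le_card (Finset.filter_subset_filter _ hFG)
          exact_mod_cast this
        have := mul_le_mul_of_nonneg_left h6 hs0.le
        linarith
      · have h5 : rtDeg F B = 0 := by
          unfold rtDeg
          rw [Finset.card_eq_zero, Finset.filter_eq_empty_iff]
          intro E hE hBE
          exact hBv (hBE.trans (Finset.mem_powersetCard.1 (hG (hFG hE))).1)
        rw [h5]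
        simpa using hm0)
    refine ⟨𝒢, h𝒢, ?_⟩
    have h7 : ((F ∩ 𝒢).card : ℝ) ≤ ((G ∩ 𝒢).card : ℝ) := by
      exact_mod_cast Finset.card_le_card (Finset.inter_subset_inter_right hFG)
    have h8 : (n : ℝ) ^ 2 * s * (δ * D) ≤ ε / 3 * (p n * M) := by
      have a1 : s * δ * (D * (n : ℝ) ^ 2) ≤ s * δ * (K * (p n * M)) :=
        mul_le_mul_of_nonneg_left hpC (by positivity)
      have a2 : s * δ * (K * (p n * M)) = ε / 3 * (p n * M) := by rw [← hδ1]; ring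
      linarith
    linarith
  · have h1 : (𝓒.card : ℝ) ≤ Real.exp ((s + 1) * (n : ℝ) ^ 2 * Real.log n) := by
      have a1 : (𝓒.card : ℝ) ≤ ((n : ℝ) ^ (s + 1)) ^ (n ^ 2) := by exact_mod_cast hcard
      have a2 : ((n : ℝ) ^ (s + 1)) ^ (n ^ 2) = Real.exp ((s + 1) * (n : ℝ) ^ 2 * Real.log n) := by
        rw [← pow_mul, show ((s : ℝ) + 1) * (n : ℝ) ^ 2 * Real.log n
          = (((s + 1) * n ^ 2 : ℕ) : ℝ) * Real.log n by push_cast; ring, Real.exp_nat_mul,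
          Real.exp_log hn0r]
      rwa [a2] at a1
    refine (mul_le_mul_of_nonneg_right h1 (Real.exp_nonneg _)).trans ?_
    rw [← Real.exp_add]
    apply Real.exp_le_exp.2
    have h2 : (s + 2) * (n : ℝ) ^ 2 * Real.log n ≤ c * (p n * M) := by
      have a1 := mul_le_mul_of_nonneg_right hg.1 (show (0 : ℝ) ≤ (n : ℝ) ^ 2 by positivity)
      have a2 := mul_le_mul_of_nonneg_left (a1.trans hpC) hc.le
      have a3 : c * (K / c * (s + 2) * Real.log n * (n : ℝ) ^ 2)
          = K * ((s + 2) * (n : ℝ) ^ 2 * Real.log n) := by field_simp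
      rw [a3] at a2
      refine le_of_mul_le_mul_left ?_ hK0
      linarith
    have h3 : Real.log n ≤ (n : ℝ) ^ 2 * Real.log n :=
      le_mul_of_one_le_left (by linarith) (one_le_pow₀ hn1r)
    linarith


/-- random Turán for linear cycles: for `k ≥ 5`, `ℓ ≥ 3` and
`p·n^{k−3}/(log n)² → ∞`, whp `ex(G^(k)(n,p), C^(k)_ℓ) = (⌊(ℓ−1)/2⌋+o(1))·p·C(n,k−1)`. -/
theorem stmt_3 {α : Type} [DecidableEq α] (k ℓ : ℕ) (hk : 5 ≤ k) (hℓ : 3 ≤ ℓ)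
    (C : Finset (Finset α)) (hC : IsLinearCycle k ℓ C)
    (p : ℕ → ℝ) (hp : ∀ n, p n ∈ Set.Icc (0 : ℝ) 1)
    (hgrow : Tendsto (fun n : ℕ => p n * (n : ℝ) ^ (k - 3) / (Real.log n) ^ 2)
      atTop atTop) :
    ∀ ε : ℝ, 0 < ε →
      Tendsto (fun n : ℕ => probEvent k n (p n) (fun G =>
          ((((ℓ - 1) / 2 : ℕ)) - ε : ℝ) * p n * (n.choose (k - 1) : ℝ) ≤ (exIn C G : ℝ) ∧
          (exIn C G : ℝ) ≤ ((((ℓ - 1) / 2 : ℕ)) + ε : ℝ) * p n * (n.choose (k - 1) : ℝ)))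
        atTop (nhds 1) := by
  intro ε hε
  have hlog : Tendsto (fun n : ℕ => Real.exp (- Real.log n)) atTop (nhds 0) :=
    Real.tendsto_exp_neg_atTop_nhds_zero.comp
      (Real.tendsto_log_atTop.comp tendsto_natCast_atTop_atTop)
  have hlim : Tendsto (fun n : ℕ => 1 - 3 * Real.exp (- Real.log n)) atTop (nhds 1) := by
    have := (hlog.const_mul 3).const_sub 1
    simpa using this
  refine tendsto_of_tendsto_of_tendsto_of_le_of_le' hlim tendsto_const_nhds ?_
    (Eventually.of_forall fun n => pe_le_one k n (p n) (hp n) _)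
  filter_upwards [rt_lowfail k ℓ hk hℓ C hC p hp hgrow ε hε,
    rt_upfail k ℓ hk hℓ C hC p hp hgrow ε hε] with n h1 h2
  have h3 := pe_cover k n (p n) (hp n) (fun _ => True)
    (fun G => ((((ℓ - 1) / 2 : ℕ)) - ε : ℝ) * p n * (n.choose (k - 1) : ℝ) ≤ (exIn C G : ℝ) ∧
      (exIn C G : ℝ) ≤ ((((ℓ - 1) / 2 : ℕ)) + ε : ℝ) * p n * (n.choose (k - 1) : ℝ))
    (fun G => (¬ ((((ℓ - 1) / 2 : ℕ)) - ε : ℝ) * p n * (n.choose (k - 1) : ℝ) ≤ (exIn C G : ℝ)) ∨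
      ¬ (exIn C G : ℝ) ≤ ((((ℓ - 1) / 2 : ℕ)) + ε : ℝ) * p n * (n.choose (k - 1) : ℝ))
    (fun G _ _ => by
      by_cases ha : ((((ℓ - 1) / 2 : ℕ)) - ε : ℝ) * p n * (n.choose (k - 1) : ℝ) ≤ (exIn C G : ℝ)
      · by_cases hb : (exIn C G : ℝ) ≤ ((((ℓ - 1) / 2 : ℕ)) + ε : ℝ) * p n * (n.choose (k - 1) : ℝ)
        · exact Or.inl ⟨ha, hb⟩
        · exact Or.inr (Or.inr hb)
      · exact Or.inr (Or.inl ha))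
  have h4 := pe_cover k n (p n) (hp n) _ _ _ (fun G _ (h :
    (¬ ((((ℓ - 1) / 2 : ℕ)) - ε : ℝ) * p n * (n.choose (k - 1) : ℝ) ≤ (exIn C G : ℝ)) ∨
      ¬ (exIn C G : ℝ) ≤ ((((ℓ - 1) / 2 : ℕ)) + ε : ℝ) * p n * (n.choose (k - 1) : ℝ)) => h)
  rw [pe_true] at h3
  linarith
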